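/- arXiv:1309.0725 — 5 statements merged into one kernel-verified Lean document; each statement's English description precedes it below -/
import Mathlib

section
/- Let P_7 = conv((C_6 × {0}) ∪ (C_6^⋆ × {-1,1})) ⊂ ℝ^7, where C_6 = [-1,1]^6 and C_6^⋆ = conv{±e_1, …, ±e_6}. Then P_7 is a centrally symmetric lattice polytope whose only interior lattice point is the origin, and its linear Ehrhart coefficient equals ℓ_1(P_7) = 1534/105 > 14 = ℓ_1(C_7). Hence P_7 is a counterexample to Wills' conjecture in dimension 7. -/
open MeasureTheory Polynomial Pointwise

/-- The number of integer lattice points contained in a subset of `ℝ^n`. -/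
noncomputable def latticePointCount {n : ℕ} (S : Set (Fin n → ℝ)) : ℕ :=
  {v : Fin n → ℤ | (fun i => (v i : ℝ)) ∈ S}.ncard

/-- A lattice polytope in `ℝ^n`: the convex hull of finitely many integer points. -/
def IsLatticePolytope {n : ℕ} (P : Set (Fin n → ℝ)) : Prop :=
  ∃ V : Finset (Fin n → ℤ),
    P = convexHull ℝ ((fun v : Fin n → ℤ => fun i => (v i : ℝ)) '' (V : Set (Fin n → ℤ)))

/-- `L` is the Ehrhart polynomial of `P`: for every positive integer `k` its value at `k`
is the number of lattice points of the dilate `kP`. -/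
def IsEhrhartPoly {n : ℕ} (P : Set (Fin n → ℝ)) (L : Polynomial ℝ) : Prop :=
  ∀ k : ℕ, 0 < k → L.eval (k : ℝ) = latticePointCount ((k : ℝ) • P)

/-- The standard crosspolytope `C_6^⋆ = conv{±e_1, …, ±e_6}` in `ℝ^6`. -/
def crossPolytope6 : Set (Fin 6 → ℝ) :=
  convexHull ℝ {y : Fin 6 → ℝ | ∃ i : Fin 6, y = Pi.single i 1 ∨ y = -Pi.single i 1}

/-- `P_7 = conv((C_6 × {0}) ∪ (C_6^⋆ × {-1,1})) ⊂ ℝ^7`. -/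
def polytopeP7 : Set (Fin 7 → ℝ) :=
  convexHull ℝ
    ({x : Fin 7 → ℝ | (∀ i, |x i| ≤ 1) ∧ x 6 = 0} ∪
     {x : Fin 7 → ℝ | (fun i : Fin 6 => x i.castSucc) ∈ crossPolytope6 ∧
        (x 6 = 1 ∨ x 6 = -1)})


/-- Excess of an integer over the level `a`. -/
def exc (a : ℕ) (z : ℤ) : ℕ := z.natAbs - a

/-- Lattice points whose total excess over `a` is at most `b`. -/
noncomputable def G : (n : ℕ) → ℕ → ℕ → Finset (Fin n → ℤ)
  | 0, _, _ => {fun i => i.elim0}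
  | n + 1, a, b => (Finset.Icc (-((a + b : ℕ) : ℤ)) ((a + b : ℕ) : ℤ)).biUnion
      (fun z => (G n a (b - exc a z)).image (fun v => (Fin.cons z v : Fin (n + 1) → ℤ)))

theorem mem_G (n a b : ℕ) (v : Fin n → ℤ) : v ∈ G n a b ↔ ∑ i, exc a (v i) ≤ b := by
  induction n generalizing b with
  | zero =>
    simp only [G, Finset.mem_singleton, Finset.univ_eq_empty, Finset.sum_empty, zero_le, iff_true]
    exact Subsingleton.elim _ _
  | succ n ih =>
    simp only [G, Finset.mem_biUnion, Finset.mem_image, Finset.mem_Icc, ih, Fin.sum_univ_succ]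
    constructor
    · rintro ⟨z, hz, w, hw, rfl⟩
      simp only [Fin.cons_zero, Fin.cons_succ]
      have : exc a z ≤ b := by unfold exc; omega
      omega
    · intro h
      have h0 : exc a (v 0) ≤ b := by omega
      refine ⟨v 0, ?_, Fin.tail v, ?_, Fin.cons_self_tail v⟩
      · unfold exc at h0; omega
      · simp only [Fin.tail]; omega

theorem sum_exc (a b : ℕ) (g : ℕ → ℕ) :
    ∑ z ∈ Finset.Icc (-((a + b : ℕ) : ℤ)) ((a + b : ℕ) : ℤ), g (exc a z)
      = (2 * a + 1) * g 0 + 2 * ∑ c ∈ Finset.range b, g (c + 1) := by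
  induction b with
  | zero =>
    rw [Finset.sum_congr rfl (g := fun _ => g 0)]
    · rw [Finset.sum_const, Int.card_Icc, smul_eq_mul]
      simp only [add_zero, Finset.range_zero, Finset.sum_empty, mul_zero]
      congr 1
      omega
    · intro z hz
      rw [Finset.mem_Icc] at hz
      congr 1
      unfold exc; omega
  | succ b ih =>
    have h1 : Finset.Icc (-((a + (b + 1) : ℕ) : ℤ)) ((a + (b + 1) : ℕ) : ℤ)
        = insert (-((a + (b + 1) : ℕ) : ℤ)) (insert ((a + (b + 1) : ℕ) : ℤ)
          (Finset.Icc (-((a + b : ℕ) : ℤ)) ((a + b : ℕ) : ℤ))) := by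
      ext z
      simp only [Finset.mem_insert, Finset.mem_Icc]
      omega
    have e1 : exc a (-((a + (b + 1) : ℕ) : ℤ)) = b + 1 := by unfold exc; omega
    have e2 : exc a (((a + (b + 1) : ℕ) : ℤ)) = b + 1 := by unfold exc; omega
    rw [h1, Finset.sum_insert, Finset.sum_insert, ih, Finset.sum_range_succ, e1, e2]
    · ring
    · simp only [Finset.mem_Icc]; omega
    · simp only [Finset.mem_insert, Finset.mem_Icc]; omega

theorem card_G_succ (n a b : ℕ) :
    (G (n + 1) a b).card = (2 * a + 1) * (G n a b).card
      + 2 * ∑ i ∈ Finset.range b, (G n a i).card := by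
  have h : (G (n + 1) a b).card =
      ∑ z ∈ Finset.Icc (-((a + b : ℕ) : ℤ)) ((a + b : ℕ) : ℤ), (G n a (b - exc a z)).card := by
    rw [G, Finset.card_biUnion]
    · refine Finset.sum_congr rfl fun z _ => ?_
      exact Finset.card_image_of_injective _ (Fin.cons_right_injective (α := fun _ => ℤ) z)
    · intro z _ w _ hzw
      rw [Function.onFun, Finset.disjoint_left]
      intro x hx hy
      simp only [Finset.mem_image] at hx hy
      obtain ⟨u, _, rfl⟩ := hx
      obtain ⟨u', _, h⟩ := hy
      exact hzw (by simpa using (congrFun h 0).symm)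
  rw [h, sum_exc a b (fun e => (G n a (b - e)).card), Nat.sub_zero,
    ← Finset.sum_range_reflect (fun i => (G n a i).card)]
  congr 2
  refine Finset.sum_congr rfl fun i _ => ?_
  congr 2
  omega

theorem card_G (n a b : ℕ) : (G n a b).card =
    ∑ m ∈ Finset.range (n + 1), n.choose m * 2 ^ m * b.choose m * (2 * a + 1) ^ (n - m) := by
  induction n generalizing b with
  | zero => simp [G]
  | succ n ih =>
    rw [card_G_succ]
    simp only [ih]
    rw [Finset.sum_comm]
    have hs : ∀ m, ∑ i ∈ Finset.range b, n.choose m * 2 ^ m * i.choose m * (2 * a + 1) ^ (n - m)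
        = n.choose m * 2 ^ m * b.choose (m + 1) * (2 * a + 1) ^ (n - m) := by
      intro m
      rw [← Finset.sum_mul, ← Finset.mul_sum]
      congr 2
      induction b with
      | zero => simp
      | succ b ihb => rw [Finset.sum_range_succ, ihb, Nat.choose_succ_succ b m, add_comm]
    simp only [hs]
    rw [Finset.sum_range_succ' _ (n + 1), Finset.mul_sum, Finset.mul_sum]
    rw [Finset.sum_congr rfl (g := fun m => (n.choose (m + 1) * 2 ^ (m + 1) * b.choose (m + 1)
        * (2 * a + 1) ^ (n - m)) + 2 * (n.choose m * 2 ^ m * b.choose (m + 1)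
          * (2 * a + 1) ^ (n - m)))
      (s₂ := Finset.range (n + 1)) (f := fun k => (n + 1).choose (k + 1) * 2 ^ (k + 1)
        * b.choose (k + 1) * (2 * a + 1) ^ (n + 1 - (k + 1)))]
    · rw [Finset.sum_add_distrib, add_right_comm]
      congr 1
      rw [Finset.sum_range_succ (fun m => n.choose (m + 1) * 2 ^ (m + 1) * b.choose (m + 1)
        * (2 * a + 1) ^ (n - m)), Finset.sum_range_succ' _ n]
      simp only [Nat.choose_succ_self, zero_mul, add_zero]
      congr 1
      · refine Finset.sum_congr rfl fun m hm => ?_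
        rw [Finset.mem_range] at hm
        obtain ⟨d, rfl⟩ : ∃ d, n = m + 1 + d := ⟨n - (m + 1), by omega⟩
        have e1 : m + 1 + d - (m + 1) = d := by omega
        have e2 : m + 1 + d - m = d + 1 := by omega
        rw [e1, e2]
        ring
      · simp only [Nat.choose_zero_right, Nat.sub_zero]
        ring
    · intro m _
      rw [Nat.choose_succ_succ n m, Nat.add_sub_add_right]
      ring

theorem choose_real (b : ℕ) :
    ((b.choose 2 : ℕ) : ℝ) = b * (b - 1) / 2 ∧
    ((b.choose 3 : ℕ) : ℝ) = b * (b - 1) * (b - 2) / 6 ∧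
    ((b.choose 4 : ℕ) : ℝ) = b * (b - 1) * (b - 2) * (b - 3) / 24 ∧
    ((b.choose 5 : ℕ) : ℝ) = b * (b - 1) * (b - 2) * (b - 3) * (b - 4) / 120 ∧
    ((b.choose 6 : ℕ) : ℝ) = b * (b - 1) * (b - 2) * (b - 3) * (b - 4) * (b - 5) / 720 := by
  induction b with
  | zero => simp
  | succ b ih =>
    obtain ⟨h2, h3, h4, h5, h6⟩ := ih
    refine ⟨?_, ?_, ?_, ?_, ?_⟩
    · rw [Nat.choose_succ_succ b 1]; push_cast; rw [h2, Nat.choose_one_right]; ring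
    · rw [Nat.choose_succ_succ b 2]; push_cast; rw [h2, h3]; ring
    · rw [Nat.choose_succ_succ b 3]; push_cast; rw [h3, h4]; ring
    · rw [Nat.choose_succ_succ b 4]; push_cast; rw [h4, h5]; ring
    · rw [Nat.choose_succ_succ b 5]; push_cast; rw [h5, h6]; ring

/-- Slice count as a polynomial, at heights `c + 1` of the `K`-th dilate. -/
noncomputable def gR (K c : ℝ) : ℝ :=
  (2 * (K - (c + 1)) + 1) ^ 6 + 12 * (c + 1) * (2 * (K - (c + 1)) + 1) ^ 5
  + 60 * ((c + 1) * c / 2) * (2 * (K - (c + 1)) + 1) ^ 4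
  + 160 * ((c + 1) * c * (c - 1) / 6) * (2 * (K - (c + 1)) + 1) ^ 3
  + 240 * ((c + 1) * c * (c - 1) * (c - 2) / 24) * (2 * (K - (c + 1)) + 1) ^ 2
  + 192 * ((c + 1) * c * (c - 1) * (c - 2) * (c - 3) / 120) * (2 * (K - (c + 1)) + 1)
  + 64 * ((c + 1) * c * (c - 1) * (c - 2) * (c - 3) * (c - 4) / 720)

theorem card_G_real (k c : ℕ) (h : c < k) :
    ((G 6 (k - (c + 1)) (c + 1)).card : ℝ) = gR k c := by
  obtain ⟨h2, h3, h4, h5, h6⟩ := choose_real (c + 1)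
  have hc : ((k - (c + 1) : ℕ) : ℝ) = (k : ℝ) - (c + 1) := by
    rw [Nat.cast_sub (by omega)]; push_cast; ring
  rw [card_G]
  simp only [Finset.sum_range_succ, Finset.sum_range_zero]
  have c2 : Nat.choose 6 2 = 15 := rfl
  have c3 : Nat.choose 6 3 = 20 := rfl
  have c4 : Nat.choose 6 4 = 15 := rfl
  have c5 : Nat.choose 6 5 = 6 := rfl
  simp only [c2, c3, c4, c5, Nat.choose_zero_right, Nat.choose_one_right, Nat.choose_self]
  push_cast
  rw [h2, h3, h4, h5, h6, hc]
  push_cast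
  unfold gR
  ring

theorem sum_gR (K : ℝ) (n : ℕ) : ∑ c ∈ Finset.range n, gR K c =
    (137/105)*K^0*(n:ℝ)^1
    + (-152/45)*K^0*(n:ℝ)^2
    + (-112/9)*K^0*(n:ℝ)^3
    + (-10/9)*K^0*(n:ℝ)^4
    + (382/45)*K^0*(n:ℝ)^5
    + (-68/45)*K^0*(n:ℝ)^6
    + (-148/63)*K^0*(n:ℝ)^7
    + (44/5)*K^1*(n:ℝ)^1
    + (472/15)*K^1*(n:ℝ)^2
    + (-8)*K^1*(n:ℝ)^3
    + (-40/3)*K^1*(n:ℝ)^4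
    + (296/5)*K^1*(n:ℝ)^5
    + (448/15)*K^1*(n:ℝ)^6
    + (-20)*K^2*(n:ℝ)^1
    + (40)*K^2*(n:ℝ)^2
    + (-40)*K^2*(n:ℝ)^3
    + (-280)*K^2*(n:ℝ)^4
    + (-120)*K^2*(n:ℝ)^5
    + (-160/3)*K^3*(n:ℝ)^1
    + (320/3)*K^3*(n:ℝ)^2
    + (1600/3)*K^3*(n:ℝ)^3
    + (640/3)*K^3*(n:ℝ)^4
    + (-80)*K^4*(n:ℝ)^1
    + (-480)*K^4*(n:ℝ)^2
    + (-160)*K^4*(n:ℝ)^3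
    + (192)*K^5*(n:ℝ)^1
    + (64)*K^6*(n:ℝ)^1 := by
  induction n with
  | zero => simp
  | succ n ih =>
    rw [Finset.sum_range_succ, ih]
    unfold gR
    push_cast
    ring

/-- Lattice points of the `k`-th dilate. -/
noncomputable def H (k : ℕ) : Finset (Fin 7 → ℤ) :=
  (Finset.Icc (-((0 + k : ℕ) : ℤ)) ((0 + k : ℕ) : ℤ)).biUnion
      (fun z => (G 6 (k - exc 0 z) (exc 0 z)).image
        (fun v => (Fin.snoc v z : Fin 7 → ℤ)))

theorem mem_H (k : ℕ) (v : Fin 7 → ℤ) : v ∈ H k ↔ (v 6).natAbs ≤ k ∧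
    ∑ i : Fin 6, ((v i.castSucc).natAbs - (k - (v 6).natAbs)) ≤ (v 6).natAbs := by
  simp only [H, Finset.mem_biUnion, Finset.mem_image, Finset.mem_Icc, mem_G]
  constructor
  · rintro ⟨z, hz, w, hw, rfl⟩
    have h6 : (Fin.snoc w z : Fin 7 → ℤ) 6 = z := Fin.snoc_last (α := fun _ => ℤ) z w
    have hi : ∀ i : Fin 6, (Fin.snoc w z : Fin 7 → ℤ) i.castSucc = w i :=
      fun i => Fin.snoc_castSucc (α := fun _ => ℤ) z w i
    simp only [h6, hi]
    simp only [exc, Nat.sub_zero] at hw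
    exact ⟨by omega, hw⟩
  · rintro ⟨h1, h2⟩
    refine ⟨v 6, by omega, Fin.init v, ?_, Fin.snoc_init_self v⟩
    simpa [exc, Fin.init] using h2

theorem card_H (k : ℕ) : (H k).card = (2 * k + 1) ^ 6
    + 2 * ∑ c ∈ Finset.range k, (G 6 (k - (c + 1)) (c + 1)).card := by
  rw [H, Finset.card_biUnion]
  · rw [Finset.sum_congr rfl (g := fun z => (fun e => (G 6 (k - e) e).card) (exc 0 z))]
    · rw [sum_exc 0 k (fun e => (G 6 (k - e) e).card)]
      congr 1
      rw [card_G]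
      simp [Finset.sum_range_succ]
    · intro z _
      exact Finset.card_image_of_injective _ (Fin.snoc_left_injective (α := fun _ => ℤ) z)
  · intro z _ w _ hzw
    rw [Function.onFun, Finset.disjoint_left]
    intro x hx hy
    simp only [Finset.mem_image] at hx hy
    obtain ⟨u, _, rfl⟩ := hx
    obtain ⟨u', _, h⟩ := hy
    have := congrFun h (Fin.last 6)
    rw [Fin.snoc_last, Fin.snoc_last] at this
    exact hzw this.symm

theorem card_H_real (k : ℕ) : ((H k).card : ℝ) =
    15656/315 * k^7 + 4952/45 * k^6 + 7004/45 * k^5 + 1756/9 * k^4 + 7112/45 * k^3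
     + 3188/45 * k^2 + 1534/105 * k + 1 := by
  rw [card_H]
  push_cast
  rw [Finset.sum_congr rfl (fun c hc => card_G_real k c (Finset.mem_range.mp hc)), sum_gR]
  ring

/-- Inequality description of `polytopeP7`. -/
def Q7 : Set (Fin 7 → ℝ) :=
  {x | |x 6| ≤ 1 ∧ ∀ S : Finset (Fin 6), ∑ i ∈ S, (|x i.castSucc| + |x 6| - 1) ≤ |x 6|}

theorem mem_Q7' (x : Fin 7 → ℝ) (h6 : |x 6| ≤ 1)
    (h : ∑ i : Fin 6, max (|x i.castSucc| - (1 - |x 6|)) 0 ≤ |x 6|) : x ∈ Q7 := by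
  refine ⟨h6, fun S => le_trans ?_ h⟩
  calc ∑ i ∈ S, (|x i.castSucc| + |x 6| - 1)
      ≤ ∑ i ∈ S, max (|x i.castSucc| - (1 - |x 6|)) 0 :=
        Finset.sum_le_sum fun i _ => le_trans (by linarith) (le_max_left _ _)
    _ ≤ _ := Finset.sum_le_sum_of_subset_of_nonneg (Finset.subset_univ _)
        fun i _ _ => le_max_right _ _

theorem Q7_sum (x : Fin 7 → ℝ) (h : x ∈ Q7) :
    ∑ i : Fin 6, max (|x i.castSucc| - (1 - |x 6|)) 0 ≤ |x 6| := by
  refine le_trans (le_of_eq ?_)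
    (h.2 (Finset.univ.filter (fun i => 0 ≤ |x i.castSucc| + |x 6| - 1)))
  rw [Finset.sum_filter]
  refine Finset.sum_congr rfl fun i _ => ?_
  split_ifs with hi
  · rw [max_eq_left (by linarith)]; ring
  · rw [max_eq_right (by linarith)]

theorem Q7_le (x : Fin 7 → ℝ) (h : x ∈ Q7) (i : Fin 7) : |x i| ≤ 1 := by
  refine Fin.lastCases ?_ (fun i => ?_) i
  · exact h.1
  · have := h.2 {i}
    rw [Finset.sum_singleton] at this
    linarith

theorem convex_Q7 : Convex ℝ Q7 := by
  intro x hx y hy a b ha hb hab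
  have tri : ∀ i, |(a • x + b • y) i| ≤ a * |x i| + b * |y i| := by
    intro i
    simp only [Pi.add_apply, Pi.smul_apply, smul_eq_mul]
    refine (abs_add_le _ _).trans ?_
    rw [abs_mul, abs_mul, abs_of_nonneg ha, abs_of_nonneg hb]
  have h6 := tri 6
  have h61 : |(a • x + b • y) 6| ≤ 1 := by
    have := mul_le_mul_of_nonneg_left hx.1 ha
    have := mul_le_mul_of_nonneg_left hy.1 hb
    linarith
  refine ⟨h61, fun S => ?_⟩
  rcases S.eq_empty_or_nonempty with rfl | hS
  · simp
  · have hc : (1 : ℝ) ≤ S.card := by exact_mod_cast hS.card_pos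
    have hX := mul_le_mul_of_nonneg_left (hx.2 S) ha
    have hY := mul_le_mul_of_nonneg_left (hy.2 S) hb
    have hsum : ∑ i ∈ S, |(a • x + b • y) i.castSucc| ≤
        a * ∑ i ∈ S, |x i.castSucc| + b * ∑ i ∈ S, |y i.castSucc| := by
      rw [Finset.mul_sum, Finset.mul_sum, ← Finset.sum_add_distrib]
      exact Finset.sum_le_sum fun i _ => tri _
    simp only [Finset.sum_sub_distrib, Finset.sum_add_distrib, Finset.sum_const, nsmul_eq_mul,
      mul_one] at hX hY ⊢
    have h3 := mul_le_mul_of_nonneg_left h6 (sub_nonneg.mpr hc)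
    have h4 : (S.card : ℝ) = a * S.card + b * S.card := by rw [← add_mul, hab, one_mul]
    nlinarith

theorem cross_sub (y : Fin 6 → ℝ) (hy : y ∈ crossPolytope6) : ∑ i, |y i| ≤ 1 := by
  have hc : Convex ℝ {y : Fin 6 → ℝ | ∑ i, |y i| ≤ 1} := by
    intro x hx y hy a b ha hb hab
    simp only [Set.mem_ofPred_eq] at *
    calc ∑ i, |(a • x + b • y) i| ≤ ∑ i, (a * |x i| + b * |y i|) := by
          refine Finset.sum_le_sum fun i _ => ?_
          simp only [Pi.add_apply, Pi.smul_apply, smul_eq_mul]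
          refine (abs_add_le _ _).trans ?_
          rw [abs_mul, abs_mul, abs_of_nonneg ha, abs_of_nonneg hb]
      _ = a * ∑ i, |x i| + b * ∑ i, |y i| := by
          rw [Finset.mul_sum, Finset.mul_sum, ← Finset.sum_add_distrib]
      _ ≤ 1 := by nlinarith
  refine convexHull_min ?_ hc hy
  rintro z ⟨i, rfl | rfl⟩ <;>
  · simp only [Set.mem_ofPred_eq, Pi.neg_apply, abs_neg]
    rw [Finset.sum_eq_single i]
    · simp
    · intro j _ hj; simp [hj]
    · simp

theorem sub_cross (y : Fin 6 → ℝ) (hy : ∑ i, |y i| ≤ 1) : y ∈ crossPolytope6 := by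
  have hc : Convex ℝ crossPolytope6 := convex_convexHull _ _
  have hp : ∀ i : Fin 6, (Pi.single i 1 : Fin 6 → ℝ) ∈ crossPolytope6 :=
    fun i => subset_convexHull _ _ ⟨i, Or.inl rfl⟩
  have hn : ∀ i : Fin 6, -(Pi.single i 1 : Fin 6 → ℝ) ∈ crossPolytope6 :=
    fun i => subset_convexHull _ _ ⟨i, Or.inr rfl⟩
  have h0 : (0 : Fin 6 → ℝ) ∈ crossPolytope6 := by
    have := hc (hp 0) (hn 0) (a := 1 / 2) (b := 1 / 2) (by norm_num) (by norm_num) (by norm_num)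
    simpa using this
  have hs := hc.sum_mem (t := (Finset.univ : Finset (Option (Fin 6))))
    (w := fun o => o.elim (1 - ∑ i, |y i|) (fun i => |y i|))
    (z := fun o => o.elim 0 (fun i => if 0 ≤ y i then Pi.single i 1 else -Pi.single i 1))
    (by
      intro o _
      cases o with
      | none => simpa using hy
      | some i => exact abs_nonneg _)
    (by simp [Fintype.sum_option])
    (by
      intro o _
      cases o with
      | none => exact h0
      | some i =>
        simp only [Option.elim]
        split_ifs
        · exact hp i
        · exact hn i)
  convert hs using 1
  rw [Fintype.sum_option]
  ext j
  simp only [Option.elim, smul_zero, zero_add, Finset.sum_apply, Pi.smul_apply, smul_eq_mul]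
  rw [Finset.sum_eq_single j]
  · split_ifs with h
    · simp [abs_of_nonneg h]
    · simp [abs_of_neg (not_le.mp h)]
  · intro i _ hij
    split_ifs <;> simp [hij.symm]
  · simp

theorem P7_sub_Q7 : polytopeP7 ⊆ Q7 := by
  refine convexHull_min ?_ convex_Q7
  rintro x (⟨h, h6⟩ | ⟨h, h6⟩)
  · refine ⟨h 6, fun S => ?_⟩
    rw [h6, abs_zero]
    refine Finset.sum_nonpos fun i _ => ?_
    have := h i.castSucc
    linarith
  · have h1 : |x 6| = 1 := by rcases h6 with h | h <;> simp [h]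
    refine mem_Q7' x h1.le ?_
    rw [h1]
    refine le_trans (le_of_eq ?_) (cross_sub _ h)
    refine Finset.sum_congr rfl fun i _ => ?_
    rw [max_eq_left] <;> simp

theorem Q7_sub_P7 : Q7 ⊆ polytopeP7 := by
  intro x hx
  have hsum := Q7_sum x hx
  have hle := Q7_le x hx
  have h61 := hx.1
  set s := |x 6| with hs
  have hs0 : 0 ≤ s := abs_nonneg _
  rcases hs0.eq_or_lt with h0 | h0
  · exact subset_convexHull _ _ (Or.inl ⟨hle, abs_eq_zero.mp h0.symm⟩)
  have hcub : ∀ x : Fin 7 → ℝ, (∀ i, |x i| ≤ 1) → x 6 = 0 → x ∈ polytopeP7 :=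
    fun x h h' => subset_convexHull _ _ (Or.inl ⟨h, h'⟩)
  have hcro : ∀ x : Fin 7 → ℝ, ∑ i : Fin 6, |x i.castSucc| ≤ 1 → (x 6 = 1 ∨ x 6 = -1) →
      x ∈ polytopeP7 := fun x h h' => subset_convexHull _ _ (Or.inr ⟨sub_cross _ h, h'⟩)
  have hP : Convex ℝ polytopeP7 := convex_convexHull _ _
  -- the clamped part
  obtain ⟨y, hy1, hy2⟩ : ∃ y : Fin 6 → ℝ, (∀ i, |y i| ≤ 1 - s) ∧
      ∀ i, |x i.castSucc - y i| = max (|x i.castSucc| - (1 - s)) 0 := by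
    refine ⟨fun i => max (-(1 - s)) (min (1 - s) (x i.castSucc)), fun i => ?_, fun i => ?_⟩
    · rw [abs_le]
      exact ⟨le_max_left _ _, max_le (by linarith) (min_le_left _ _)⟩
    · dsimp only
      generalize x i.castSucc = r
      rcases le_total r (1 - s) with h | h
      · rw [min_eq_right h]
        rcases le_total (-(1 - s)) r with h' | h'
        · rw [max_eq_right h', sub_self, abs_zero, max_eq_right]
          have := abs_le.mpr ⟨h', h⟩
          linarith
        · rw [max_eq_left h', abs_of_nonpos (by linarith), abs_of_nonpos (by linarith),
            max_eq_left (by linarith)]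
          ring
      · rw [min_eq_left h, max_eq_right (by linarith), abs_of_nonneg (by linarith),
          abs_of_nonneg (by linarith), max_eq_left (by linarith)]
  have hA : (Fin.snoc (fun i => s⁻¹ * (x i.castSucc - y i)) (s⁻¹ * x 6) : Fin 7 → ℝ)
      ∈ polytopeP7 := by
    refine hcro _ ?_ ?_
    · simp only [Fin.snoc_castSucc, abs_mul, abs_inv, abs_of_pos h0, hy2]
      rw [← Finset.mul_sum]
      calc _ ≤ s⁻¹ * s := mul_le_mul_of_nonneg_left hsum (by positivity)
        _ = 1 := inv_mul_cancel₀ h0.ne'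
    · have : (Fin.snoc (fun i => s⁻¹ * (x i.castSucc - y i)) (s⁻¹ * x 6) : Fin 7 → ℝ) 6
        = s⁻¹ * x 6 := Fin.snoc_last (α := fun _ => ℝ) _ _
      rw [this]
      rcases abs_choice (x 6) with h | h
      · left; rw [← h, ← hs]; exact inv_mul_cancel₀ h0.ne'
      · right
        rw [← neg_neg (x 6), ← h, ← hs, mul_neg, inv_mul_cancel₀ h0.ne']
  have hB : (Fin.snoc (fun i => (1 - s)⁻¹ * y i) 0 : Fin 7 → ℝ) ∈ polytopeP7 := by
    refine hcub _ (fun i => ?_) (Fin.snoc_last (α := fun _ => ℝ) _ _)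
    refine Fin.lastCases ?_ (fun i => ?_) i
    · rw [Fin.snoc_last, abs_zero]; exact zero_le_one
    · simp only [Fin.snoc_castSucc, abs_mul, abs_inv]
      rw [abs_of_nonneg (sub_nonneg.mpr h61)]
      rcases h61.eq_or_lt with h | h
      · simp [h]
      · calc _ ≤ (1 - s)⁻¹ * (1 - s) :=
              mul_le_mul_of_nonneg_left (hy1 i) (inv_nonneg.mpr (by linarith))
          _ = 1 := inv_mul_cancel₀ (by linarith)
  have := hP hA hB hs0 (sub_nonneg.mpr h61) (by ring)
  convert this using 1
  ext i
  refine Fin.lastCases ?_ (fun i => ?_) i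
  · simp only [Pi.add_apply, Pi.smul_apply, Fin.snoc_last, smul_eq_mul, mul_zero, add_zero]
    rw [mul_inv_cancel_left₀ h0.ne']
    rfl
  · simp only [Pi.add_apply, Pi.smul_apply, Fin.snoc_castSucc, smul_eq_mul]
    rw [mul_inv_cancel_left₀ h0.ne']
    rcases h61.eq_or_lt with h | h
    · have := hy1 i
      rw [h, sub_self] at this
      have h' : y i = 0 := abs_eq_zero.mp (le_antisymm this (abs_nonneg _))
      simp [h']
    · rw [mul_inv_cancel_left₀ (by linarith)]
      ring

theorem P7_eq : polytopeP7 = Q7 := Set.Subset.antisymm P7_sub_Q7 Q7_sub_P7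

theorem mem_dilate (k : ℕ) (hk : 0 < k) (v : Fin 7 → ℤ) :
    (fun i => (v i : ℝ)) ∈ (k : ℝ) • polytopeP7 ↔ v ∈ H k := by
  have hk' : (0 : ℝ) < k := by exact_mod_cast hk
  rw [Set.mem_smul_set_iff_inv_smul_mem₀ hk'.ne', P7_eq, mem_H]
  have key : ∀ h : (v 6).natAbs ≤ k, ∀ i : Fin 6,
      (((v i.castSucc).natAbs - (k - (v 6).natAbs) : ℕ) : ℝ) =
      k * max (|((k : ℝ)⁻¹ • fun i => (v i : ℝ)) i.castSucc|
        - (1 - |((k : ℝ)⁻¹ • fun i => (v i : ℝ)) 6|)) 0 := by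
    intro h i
    simp only [Pi.smul_apply, smul_eq_mul, abs_mul, abs_inv, abs_of_pos hk']
    rw [mul_max_of_nonneg _ _ hk'.le, mul_zero, mul_sub, mul_sub, mul_one,
      mul_inv_cancel_left₀ hk'.ne', mul_inv_cancel_left₀ hk'.ne']
    have e : ∀ z : ℤ, |(z : ℝ)| = (z.natAbs : ℝ) := by
      intro z; rw [Nat.cast_natAbs, Int.cast_abs]
    rw [e, e]
    rcases le_total (v i.castSucc).natAbs (k - (v 6).natAbs) with h' | h'
    · rw [Nat.sub_eq_zero_of_le h', max_eq_right]
      · simp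
      · have : ((v i.castSucc).natAbs : ℝ) ≤ ((k - (v 6).natAbs : ℕ) : ℝ) := by exact_mod_cast h'
        rw [Nat.cast_sub h] at this
        linarith
    · rw [Nat.cast_sub h', Nat.cast_sub h, max_eq_left]
      have : ((k - (v 6).natAbs : ℕ) : ℝ) ≤ ((v i.castSucc).natAbs : ℝ) := by exact_mod_cast h'
      rw [Nat.cast_sub h] at this
      linarith
  have h6 : ((v 6).natAbs : ℝ) = k * |((k : ℝ)⁻¹ • fun i => (v i : ℝ)) 6| := by
    simp only [Pi.smul_apply, smul_eq_mul, abs_mul, abs_inv, abs_of_pos hk']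
    rw [mul_inv_cancel_left₀ hk'.ne', Nat.cast_natAbs, Int.cast_abs]
  constructor
  · intro h
    have hs := Q7_sum _ h
    have h1 : (v 6).natAbs ≤ k := by
      have : ((v 6).natAbs : ℝ) ≤ k := by
        rw [h6]; nlinarith [h.1]
      exact_mod_cast this
    refine ⟨h1, ?_⟩
    rw [← Nat.cast_le (α := ℝ), Nat.cast_sum, Finset.sum_congr rfl (fun i _ => key h1 i),
      ← Finset.mul_sum, h6]
    exact mul_le_mul_of_nonneg_left hs hk'.le
  · rintro ⟨h1, h2⟩
    rw [← Nat.cast_le (α := ℝ), Nat.cast_sum, Finset.sum_congr rfl (fun i _ => key h1 i),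
      ← Finset.mul_sum, h6] at h2
    rw [← Nat.cast_le (α := ℝ), h6] at h1
    refine mem_Q7' _ ?_ (le_of_mul_le_mul_left h2 hk')
    exact le_of_mul_le_mul_left (by linarith) hk'

theorem mem_H_one (v : Fin 7 → ℤ) : (fun i => (v i : ℝ)) ∈ polytopeP7 ↔ v ∈ H 1 := by
  rw [← mem_dilate 1 one_pos]
  simp

theorem P7_lattice : IsLatticePolytope polytopeP7 := by
  refine ⟨H 1, Set.Subset.antisymm ?_ ?_⟩
  · set W := convexHull ℝ ((fun v : Fin 7 → ℤ => fun i => (v i : ℝ)) ''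
      (H 1 : Set (Fin 7 → ℤ))) with hW
    have hWc : Convex ℝ W := convex_convexHull _ _
    have hsub : ∀ v : Fin 7 → ℤ, (fun i => (v i : ℝ)) ∈ polytopeP7 → (fun i => (v i : ℝ)) ∈ W :=
      fun v hv => subset_convexHull _ _ ⟨v, (mem_H_one v).mp hv, rfl⟩
    refine convexHull_min ?_ hWc
    rintro x (⟨h, h6⟩ | ⟨h, h6⟩)
    · have hx : x ∈ convexHull ℝ (Set.pi Set.univ
          (fun i : Fin 7 => if i = 6 then ({0} : Set ℝ) else {-1, 1})) := by
        rw [convexHull_pi]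
        intro i _
        dsimp only
        split_ifs with hi
        · subst hi; simp [h6]
        · rw [convexHull_pair, segment_eq_Icc (by norm_num)]
          exact abs_le.mp (h i)
      refine convexHull_min ?_ hWc hx
      intro z hz
      have hz' : ∀ i, ∃ m : ℤ, z i = m ∧ |z i| ≤ 1 := by
        intro i
        have := hz i (Set.mem_univ i)
        dsimp only at this
        split_ifs at this with hi
        · exact ⟨0, by simpa using this, by simp [Set.mem_singleton_iff.mp this]⟩
        · rcases this with h | h
          · exact ⟨-1, by simp [h], by simp [h]⟩
          · rw [Set.mem_singleton_iff] at h
            exact ⟨1, by simp [h], by simp [h]⟩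
      choose m hm hm1 using hz'
      obtain rfl : z = fun i => (m i : ℝ) := funext hm
      refine hsub m (subset_convexHull _ _ (Or.inl ⟨hm1, ?_⟩))
      have := hz 6 (Set.mem_univ 6)
      simpa using this
    · have hcv : Convex ℝ {y : Fin 6 → ℝ | (Fin.snoc y (x 6) : Fin 7 → ℝ) ∈ W} := by
        intro y hy z hz a b ha hb hab
        have := hWc hy hz ha hb hab
        simp only [Set.mem_ofPred_eq]
        convert this using 1
        ext i
        refine Fin.lastCases ?_ (fun i => ?_) i
        · simp only [Pi.add_apply, Pi.smul_apply, Fin.snoc_last, smul_eq_mul]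
          rw [← add_mul, hab, one_mul]
        · simp only [Pi.add_apply, Pi.smul_apply, Fin.snoc_castSucc, smul_eq_mul]
      have hmem : (fun i : Fin 6 => x i.castSucc) ∈
          {y : Fin 6 → ℝ | (Fin.snoc y (x 6) : Fin 7 → ℝ) ∈ W} := by
        refine convexHull_min ?_ hcv h
        intro y hy
        have hyc : y ∈ crossPolytope6 := subset_convexHull _ _ hy
        obtain ⟨m, rfl⟩ : ∃ m : Fin 6 → ℤ, y = fun i => (m i : ℝ) := by
          obtain ⟨i, rfl | rfl⟩ := hy
          · refine ⟨Pi.single i 1, ?_⟩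
            ext j
            by_cases hj : j = i
            · subst hj; simp
            · simp [hj]
          · refine ⟨-Pi.single i 1, ?_⟩
            ext j
            by_cases hj : j = i
            · subst hj; simp
            · simp [hj]
        obtain ⟨e, he⟩ : ∃ e : ℤ, x 6 = e := by
          rcases h6 with h | h
          · exact ⟨1, by simp [h]⟩
          · exact ⟨-1, by simp [h]⟩
        have hE : (Fin.snoc (fun i => (m i : ℝ)) (x 6) : Fin 7 → ℝ)
            = fun i => (((Fin.snoc m e : Fin 7 → ℤ) i : ℤ) : ℝ) := by
          ext i
          refine Fin.lastCases ?_ (fun i => ?_) i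
          · simp only [Fin.snoc_last, he]
          · simp only [Fin.snoc_castSucc]
        rw [Set.mem_ofPred_eq, hE]
        refine hsub _ ?_
        rw [← hE]
        refine subset_convexHull _ _ (Or.inr ⟨?_, ?_⟩)
        · simpa only [Fin.snoc_castSucc] using hyc
        · have : (Fin.snoc (fun i => (m i : ℝ)) (x 6) : Fin 7 → ℝ) 6 = x 6 :=
            Fin.snoc_last (α := fun _ => ℝ) _ _
          rw [this]; exact h6
      have hx : (Fin.snoc (fun i : Fin 6 => x i.castSucc) (x 6) : Fin 7 → ℝ) = x :=
        Fin.snoc_init_self x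
      rw [Set.mem_ofPred_eq, hx] at hmem
      exact hmem
  · refine convexHull_min ?_ (convex_convexHull _ _)
    rintro _ ⟨v, hv, rfl⟩
    exact (mem_H_one v).mpr hv

theorem P7_symm : polytopeP7 = -polytopeP7 := by
  ext x
  rw [Set.mem_neg, P7_eq]
  simp [Q7]

theorem P7_interior :
    {v : Fin 7 → ℤ | (fun i => (v i : ℝ)) ∈ interior polytopeP7} = {0} := by
  ext v
  simp only [Set.mem_ofPred_eq, Set.mem_singleton_iff]
  constructor
  · intro h
    have hs : polytopeP7 ⊆ Metric.closedBall (0 : Fin 7 → ℝ) 1 := by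
      intro x hx
      rw [mem_closedBall_zero_iff, pi_norm_le_iff_of_nonneg zero_le_one]
      exact Q7_le x (P7_sub_Q7 hx)
    have h1 := interior_mono hs h
    rw [interior_closedBall _ one_ne_zero, mem_ball_zero_iff, pi_norm_lt_iff one_pos] at h1
    ext i
    have := h1 i
    rw [Real.norm_eq_abs] at this
    have : |v i| < 1 := by exact_mod_cast this
    simpa using Int.abs_lt_one_iff.mp this
  · rintro rfl
    rw [mem_interior]
    refine ⟨Metric.ball 0 (1 / 2), ?_, Metric.isOpen_ball, ?_⟩
    · intro x hx
      rw [mem_ball_zero_iff, pi_norm_lt_iff (by norm_num)] at hx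
      simp only [Real.norm_eq_abs] at hx
      refine Q7_sub_P7 ⟨by linarith [hx 6], fun S => ?_⟩
      refine le_trans (Finset.sum_nonpos fun i _ => ?_) (abs_nonneg _)
      linarith [hx 6, hx i.castSucc]
    · rw [mem_ball_zero_iff, pi_norm_lt_iff (by norm_num)]
      simp

theorem P7_counterexample_to_Wills :
    polytopeP7 = -polytopeP7 ∧ IsLatticePolytope polytopeP7 ∧
    {v : Fin 7 → ℤ | (fun i => (v i : ℝ)) ∈ interior polytopeP7} = {0} ∧
    ∃ L : Polynomial ℝ, IsEhrhartPoly polytopeP7 L ∧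
      L.coeff 1 = 1534 / 105 ∧ 14 < L.coeff 1 := by

  refine ⟨P7_symm, P7_lattice, P7_interior,
    C (15656 / 315) * X ^ 7 + C (4952 / 45) * X ^ 6 + C (7004 / 45) * X ^ 5 + C (1756 / 9) * X ^ 4
      + C (7112 / 45) * X ^ 3 + C (3188 / 45) * X ^ 2 + C (1534 / 105) * X + 1, ?_, ?_⟩
  · intro k hk
    have h : {v : Fin 7 → ℤ | (fun i => (v i : ℝ)) ∈ (k : ℝ) • polytopeP7}
        = (H k : Set (Fin 7 → ℤ)) := by
      ext v
      exact mem_dilate k hk v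
    rw [latticePointCount, h, Set.ncard_coe_finset, card_H_real]
    simp
  · have h : (C (15656 / 315) * X ^ 7 + C (4952 / 45) * X ^ 6 + C (7004 / 45) * X ^ 5
      + C (1756 / 9) * X ^ 4 + C (7112 / 45) * X ^ 3 + C (3188 / 45) * X ^ 2
      + C (1534 / 105) * X + 1 : Polynomial ℝ).coeff 1 = 1534 / 105 := by
      simp only [coeff_add, coeff_C_mul, coeff_X_pow, coeff_X_one, coeff_one]
      norm_num
    rw [h]
    norm_num
end

section
/- For every integer n ≥ 7 there exists a centrally symmetric lattice polytope P ⊂ ℝ^n whose only interior lattice point is the origin and whose linear Ehrhart coefficient satisfies ℓ_1(P) > 2n = ℓ_1(C_n). Hence Wills' conjecture fails in every dimension n ≥ 7. -/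
open MeasureTheory Polynomial Pointwise

namespace WillsAux

/-- The function with value `a` on the first five coordinates, `b` on the next two, `c` elsewhere. -/
def bd {R : Type*} (n : ℕ) (a b c : R) : Fin n → R :=
  fun i => if (i : ℕ) < 5 then a else if (i : ℕ) < 7 then b else c

/-- Vertices of the box with half side lengths `r`. -/
def vert {n : ℕ} (r : Fin n → ℤ) : Finset (Fin n → ℤ) :=
  Fintype.piFinset fun i => {-r i, r i}

/-- The integer points of the box with half side lengths `r`. -/
noncomputable def box {n : ℕ} (r : Fin n → ℤ) : Finset (Fin n → ℤ) :=
  Fintype.piFinset fun i => Finset.Icc (-r i) (r i)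

lemma mem_box {n : ℕ} (r v : Fin n → ℤ) : v ∈ box r ↔ ∀ i, |v i| ≤ r i := by
  simp [box, Fintype.mem_piFinset, abs_le]

lemma hull_vert {n : ℕ} (r : Fin n → ℤ) (hr : ∀ i, 0 ≤ r i) :
    convexHull ℝ ((fun v : Fin n → ℤ => fun i => (v i : ℝ)) '' (vert r : Set (Fin n → ℤ)))
      = {x | ∀ i, |x i| ≤ (r i : ℝ)} := by
  have h : ((fun v : Fin n → ℤ => fun i => (v i : ℝ)) '' (vert r : Set (Fin n → ℤ)))
      = Set.univ.pi fun i => ({-(r i : ℝ), (r i : ℝ)} : Set ℝ) := by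
    ext x
    simp only [vert, Set.mem_image, Finset.mem_coe, Fintype.mem_piFinset, Finset.mem_insert,
      Finset.mem_singleton, Set.mem_univ_pi, Set.mem_insert_iff, Set.mem_singleton_iff]
    constructor
    · rintro ⟨v, hv, rfl⟩ i
      rcases hv i with h | h <;> simp [h]
    · intro hx
      have : ∀ i, ∃ z : ℤ, (z = -r i ∨ z = r i) ∧ (z : ℝ) = x i := by
        intro i
        rcases hx i with h | h
        · exact ⟨-r i, Or.inl rfl, by rw [h]; push_cast; rfl⟩
        · exact ⟨r i, Or.inr rfl, h.symm⟩
      choose v hv hv' using this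
      exact ⟨v, hv, funext hv'⟩
  rw [h, convexHull_pi]
  ext x
  simp only [Set.mem_univ_pi, Set.mem_ofPred_eq]
  refine forall_congr' fun i => ?_
  have : (0 : ℝ) ≤ r i := by exact_mod_cast hr i
  rw [convexHull_pair, segment_eq_Icc (by linarith), Set.mem_Icc, abs_le]

/-- The vertex set. -/
def V (n : ℕ) : Finset (Fin n → ℤ) := vert (bd n 1 0 1) ∪ vert (bd n 0 1 1)

/-- The polytope `(C_5 ⊕ C_2) × C_{n-7}`. -/
def P (n : ℕ) : Set (Fin n → ℝ) :=
  convexHull ℝ ((fun v : Fin n → ℤ => fun i => (v i : ℝ)) '' (V n : Set (Fin n → ℤ)))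

lemma vert_nonempty {n : ℕ} (r : Fin n → ℤ) : (vert r).Nonempty :=
  ⟨r, by simp [vert, Fintype.mem_piFinset]⟩

lemma mem_P {n : ℕ} (x : Fin n → ℝ) :
    x ∈ P n ↔ ∃ s : ℝ, 0 ≤ s ∧ s ≤ 1 ∧ ∀ i, |x i| ≤ bd n s (1 - s) 1 i := by
  have h01 : ∀ i, 0 ≤ bd n (1 : ℤ) 0 1 i := fun i => by unfold bd; split_ifs <;> norm_num
  have h10 : ∀ i, 0 ≤ bd n (0 : ℤ) 1 1 i := fun i => by unfold bd; split_ifs <;> norm_num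
  unfold P V
  rw [Finset.coe_union, Set.image_union, convexHull_union
    ((Finset.coe_nonempty.2 (vert_nonempty _)).image _)
    ((Finset.coe_nonempty.2 (vert_nonempty _)).image _), hull_vert _ h01, hull_vert _ h10,
    mem_convexJoin]
  constructor
  · rintro ⟨a, ha, b, hb, α, β, hα, hβ, hαβ, rfl⟩
    refine ⟨α, hα, by linarith, fun i => ?_⟩
    have ha := ha i
    have hb := hb i
    have h : |(α • a + β • b) i| ≤ α * |a i| + β * |b i| := by
      simp only [Pi.add_apply, Pi.smul_apply, smul_eq_mul]
      refine (abs_add_le _ _).trans ?_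
      rw [abs_mul, abs_mul, abs_of_nonneg hα, abs_of_nonneg hβ]
    have h1 := mul_le_mul_of_nonneg_left ha hα
    have h2 := mul_le_mul_of_nonneg_left hb hβ
    refine h.trans ((add_le_add h1 h2).trans ?_)
    unfold bd
    split_ifs <;> push_cast <;> linarith
  · rintro ⟨s, hs0, hs1, hx⟩
    refine ⟨fun i => bd n (x i / s) 0 (x i) i, fun i => ?_,
      fun i => bd n 0 (x i / (1 - s)) (x i) i, fun i => ?_, s, 1 - s, hs0, by linarith, by ring,
      funext fun i => ?_⟩
    · have := hx i
      beta_reduce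
      unfold bd at *
      split_ifs at * with h1 h2
      · rw [abs_div, abs_of_nonneg hs0]
        simpa using div_le_one_of_le₀ this hs0
      · simp
      · simpa using this
    · have := hx i
      beta_reduce
      unfold bd at *
      split_ifs at * with h1 h2
      · simp
      · rw [abs_div, abs_of_nonneg (sub_nonneg.2 hs1)]
        simpa using div_le_one_of_le₀ this (sub_nonneg.2 hs1)
      · simpa using this
    · have := hx i
      simp only [Pi.add_apply, Pi.smul_apply, smul_eq_mul]
      unfold bd at *
      split_ifs at * with h1 h2
      · rcases eq_or_ne s 0 with h | h
        · subst h
          simp [abs_nonpos_iff.1 this]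
        · field_simp
          ring
      · rcases eq_or_ne (1 - s) 0 with h | h
        · rw [h] at this ⊢
          simp [abs_nonpos_iff.1 this]
        · field_simp
          ring
      · ring

lemma neg_P (n : ℕ) : P n = -P n := by
  ext x
  simp [mem_P]

lemma interior_P (n : ℕ) :
    {v : Fin n → ℤ | (fun i => (v i : ℝ)) ∈ interior (P n)} = {0} := by
  ext v
  simp only [Set.mem_ofPred_eq, Set.mem_singleton_iff]
  constructor
  · intro h
    have hsub : P n ⊆ Set.univ.pi fun _ => Set.Icc (-1 : ℝ) 1 := by
      intro x hx
      obtain ⟨s, h0, h1, hx⟩ := (mem_P x).1 hx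
      intro i _
      rw [Set.mem_Icc, ← abs_le]
      refine (hx i).trans ?_
      unfold bd
      split_ifs <;> linarith
    have h2 := interior_mono hsub h
    rw [interior_pi_set Set.finite_univ] at h2
    funext i
    have := h2 i (Set.mem_univ i)
    rw [interior_Icc] at this
    obtain ⟨ha, hb⟩ := this
    beta_reduce at ha hb
    have ha' : (-1 : ℤ) < v i := by exact_mod_cast ha
    have hb' : v i < 1 := by exact_mod_cast hb
    simp only [Pi.zero_apply]
    omega
  · rintro rfl
    rw [mem_interior_iff_mem_nhds]
    refine Filter.mem_of_superset (Metric.ball_mem_nhds _ (by norm_num : (0 : ℝ) < 1 / 2)) ?_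
    intro x hx
    refine (mem_P x).2 ⟨1 / 2, by norm_num, by norm_num, fun i => ?_⟩
    have h1 := (dist_le_pi_dist x _ i).trans hx.le
    simp only [Pi.zero_apply, Int.cast_zero, Real.dist_eq, sub_zero] at h1
    refine h1.trans ?_
    unfold bd
    split_ifs <;> norm_num

lemma mem_smul_P {n : ℕ} (k : ℕ) (hk : 0 < k) (v : Fin n → ℤ) :
    (fun i => (v i : ℝ)) ∈ (k : ℝ) • P n ↔
      ∃ j : ℕ, j ≤ k ∧ ∀ i, |v i| ≤ bd n ((k : ℤ) - j) (j : ℤ) (k : ℤ) i := by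
  have hk' : (0 : ℝ) < k := by exact_mod_cast hk
  rw [Set.mem_smul_set_iff_inv_smul_mem₀ hk'.ne', mem_P]
  have key : ∀ i, |((k : ℝ)⁻¹ • fun i => (v i : ℝ)) i| = |(v i : ℝ)| / k := by
    intro i
    simp only [Pi.smul_apply, smul_eq_mul]
    rw [abs_mul, abs_inv, abs_of_pos hk']
    field_simp
  simp only [key]
  constructor
  · rintro ⟨s, h0, h1, hx⟩
    have hnn : 0 ≤ k * (1 - s) := mul_nonneg hk'.le (by linarith)
    have hfl := Nat.floor_le hnn
    refine ⟨⌊(k : ℝ) * (1 - s)⌋₊, ?_, fun i => ?_⟩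
    · refine Nat.floor_le_of_le ?_
      nlinarith
    · have h := hx i
      rw [div_le_iff₀ hk'] at h
      unfold bd at *
      split_ifs at * with h1 h2
      · have : (|(v i : ℝ)|) ≤ (k : ℝ) - (⌊(k : ℝ) * (1 - s)⌋₊ : ℝ) := by nlinarith
        exact_mod_cast this
      · rw [Int.abs_eq_natAbs]
        norm_cast
        refine Nat.le_floor ?_
        rw [Nat.cast_natAbs]
        push_cast
        linarith
      · rw [one_mul] at h
        exact_mod_cast h
  · rintro ⟨j, hj, hx⟩
    have hj' : (j : ℝ) ≤ k := by exact_mod_cast hj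
    refine ⟨1 - j / k, ?_, ?_, fun i => ?_⟩
    · rw [sub_nonneg]
      exact div_le_one_of_le₀ hj' hk'.le
    · have : (0 : ℝ) ≤ j / k := by positivity
      linarith
    · have h := hx i
      rw [div_le_iff₀ hk']
      have h' : |(v i : ℝ)| ≤ ((bd n ((k : ℤ) - j) (j : ℤ) (k : ℤ) i : ℤ) : ℝ) := by
        exact_mod_cast h
      refine h'.trans (le_of_eq ?_)
      unfold bd
      split_ifs <;> push_cast <;> field_simp <;> ring

lemma card_box {d : ℕ} (a b c : ℤ) :
    (box (bd (7 + d) a b c)).card =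
      (2 * a + 1).toNat ^ 5 * (2 * b + 1).toNat ^ 2 * (2 * c + 1).toNat ^ d := by
  have h : ∀ x : ℤ, (x + 1 - -x).toNat = (2 * x + 1).toNat := fun x => by congr 1; ring
  simp only [box, Fintype.card_piFinset, Int.card_Icc, h]
  rw [Fin.prod_univ_add]
  congr 1
  · simp [Fin.prod_univ_succ, bd]
    ring
  · have h5 : ∀ x : ℕ, ¬ (7 + x < 5) := fun x => by omega
    simp [bd, h5]

/-- The lattice points with the last-block norm equal to `j`. -/
noncomputable def layer (n k j : ℕ) : Finset (Fin n → ℤ) :=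
  box (bd n ((k : ℤ) - j) (j : ℤ) (k : ℤ)) \ box (bd n ((k : ℤ) - j) ((j : ℤ) - 1) (k : ℤ))

lemma points_eq {d : ℕ} (k : ℕ) (hk : 0 < k) :
    {v : Fin (7 + d) → ℤ | (fun i => (v i : ℝ)) ∈ (k : ℝ) • P (7 + d)} =
      ((Finset.range (k + 1)).biUnion (layer (7 + d) k) : Finset (Fin (7 + d) → ℤ)) := by
  classical
  ext v
  rw [Set.mem_ofPred_eq, mem_smul_P k hk]
  simp only [Finset.coe_biUnion, Set.mem_iUnion, Finset.mem_coe, Finset.mem_range, layer,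
    Finset.mem_sdiff, mem_box, exists_prop]
  constructor
  · intro h
    refine ⟨Nat.find h, by have := (Nat.find_spec h).1; omega, (Nat.find_spec h).2, fun hu => ?_⟩
    rcases Nat.eq_zero_or_pos (Nat.find h) with h0 | h0
    · have := hu ⟨5, by omega⟩
      rw [h0] at this
      simp only [bd] at this
      norm_num at this
      have h3 := abs_nonneg (v ⟨5, by omega⟩)
      linarith
    · refine Nat.find_min h (Nat.sub_lt h0 one_pos) ⟨?_, fun i => ?_⟩
      · have := (Nat.find_spec h).1
        omega
      · have := hu i
        rw [Nat.cast_sub (show 1 ≤ Nat.find h from h0)]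
        unfold bd at *
        split_ifs at * <;> push_cast <;> linarith
  · rintro ⟨j, hj, h, -⟩
    exact ⟨j, by omega, h⟩

lemma layer_disjoint (n k : ℕ) {i j : ℕ} (hij : i < j) : Disjoint (layer n k i) (layer n k j) := by
  rw [Finset.disjoint_left]
  intro v hi hj
  simp only [layer, Finset.mem_sdiff, mem_box] at hi hj
  refine hj.2 fun l => ?_
  have h1 := hi.1 l
  have h2 := hj.1 l
  have h3 : (i : ℤ) + 1 ≤ j := by exact_mod_cast hij
  unfold bd at *
  split_ifs at * <;> linarith

lemma layer_card (d k j : ℕ) (hj : j ≤ k) :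
    ((layer (7 + d) k j).card : ℝ) =
      (2 * ((k : ℝ) - j) + 1) ^ 5 * (if j = 0 then 1 else 8 * (j : ℝ)) * (2 * k + 1) ^ d := by
  have hsub : box (bd (7 + d) ((k : ℤ) - j) ((j : ℤ) - 1) (k : ℤ)) ⊆
      box (bd (7 + d) ((k : ℤ) - j) (j : ℤ) (k : ℤ)) := by
    intro v hv
    rw [mem_box] at *
    intro l
    have := hv l
    unfold bd at *
    split_ifs at * <;> linarith
  obtain ⟨m, rfl⟩ := Nat.exists_eq_add_of_le hj
  rw [layer, Finset.cast_card_sdiff hsub, card_box, card_box]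
  have e1 : (2 * (((j + m : ℕ) : ℤ) - j) + 1).toNat = 2 * m + 1 := by push_cast; omega
  have e2 : (2 * (j : ℤ) + 1).toNat = 2 * j + 1 := by omega
  have e3 : (2 * ((j + m : ℕ) : ℤ) + 1).toNat = 2 * (j + m) + 1 := by omega
  rw [e1, e2, e3]
  rcases j with _ | j
  · simp
  · have e4 : (2 * (((j + 1 : ℕ) : ℤ) - 1) + 1).toNat = 2 * j + 1 := by push_cast; omega
    rw [e4]
    push_cast
    simp
    ring

lemma sum_p (k : ℕ) : ∑ i ∈ Finset.range k, (2 * (i : ℝ) + 1) ^ 5 =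
    7 / 3 * (k : ℝ) ^ 2 - 20 / 3 * (k : ℝ) ^ 4 + 16 / 3 * (k : ℝ) ^ 6 := by
  induction k with
  | zero => simp
  | succ k ih =>
    rw [Finset.sum_range_succ, ih]
    push_cast
    ring

lemma sum_q (k : ℕ) : ∑ i ∈ Finset.range k, (i : ℝ) * (2 * (i : ℝ) + 1) ^ 5 =
    -31 / 42 * (k : ℝ) - 7 / 6 * (k : ℝ) ^ 2 + 14 / 3 * (k : ℝ) ^ 3 + 10 / 3 * (k : ℝ) ^ 4
      - 8 * (k : ℝ) ^ 5 - 8 / 3 * (k : ℝ) ^ 6 + 32 / 7 * (k : ℝ) ^ 7 := by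
  induction k with
  | zero => simp
  | succ k ih =>
    rw [Finset.sum_range_succ, ih]
    push_cast
    ring

/-- The Ehrhart polynomial of `C_5 ⊕ C_2`. -/
noncomputable def M : ℝ[X] :=
  1 + C (334 / 21) * X + C (148 / 3) * X ^ 2 + C (184 / 3) * X ^ 3 + C (160 / 3) * X ^ 4
    + C (128 / 3) * X ^ 5 + C (64 / 3) * X ^ 6 + C (128 / 21) * X ^ 7

lemma sum_layers (k : ℕ) :
    ∑ j ∈ Finset.range (k + 1),
      (2 * ((k : ℝ) - j) + 1) ^ 5 * (if j = 0 then 1 else 8 * (j : ℝ)) = M.eval (k : ℝ) := by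
  have h : ∑ j ∈ Finset.range (k + 1),
      (2 * ((k : ℝ) - j) + 1) ^ 5 * (if j = 0 then 1 else 8 * (j : ℝ)) =
      ∑ i ∈ Finset.range k, (2 * (i : ℝ) + 1) ^ 5 * (8 * ((k : ℝ) - i)) + (2 * (k : ℝ) + 1) ^ 5 := by
    rw [Finset.sum_range_succ', ← Finset.sum_range_reflect]
    congr 1
    · refine Finset.sum_congr rfl fun j hj => ?_
      have hj : j + 1 ≤ k := Finset.mem_range.1 hj
      have : ((k - 1 - j : ℕ) : ℝ) = (k : ℝ) - 1 - j := by
        rw [Nat.sub_sub, Nat.cast_sub (by omega)]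
        push_cast
        ring
      rw [if_neg (by omega)]
      push_cast
      rw [this]
      ring
    · simp
  have h2 : ∑ i ∈ Finset.range k, (2 * (i : ℝ) + 1) ^ 5 * (8 * ((k : ℝ) - i)) =
      8 * (k : ℝ) * ∑ i ∈ Finset.range k, (2 * (i : ℝ) + 1) ^ 5
        - 8 * ∑ i ∈ Finset.range k, (i : ℝ) * (2 * (i : ℝ) + 1) ^ 5 := by
    rw [Finset.mul_sum, Finset.mul_sum, ← Finset.sum_sub_distrib]
    exact Finset.sum_congr rfl fun i _ => by ring
  rw [h, h2, sum_p, sum_q]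
  simp [M]
  ring

lemma ehrhart (d : ℕ) : IsEhrhartPoly (P (7 + d)) (M * (C 2 * X + 1) ^ d) := by
  intro k hk
  unfold latticePointCount
  rw [points_eq k hk, Set.ncard_coe_finset, Finset.card_biUnion]
  · push_cast
    rw [Finset.sum_congr rfl fun j hj =>
      layer_card d k j (Nat.lt_succ_iff.1 (Finset.mem_range.1 hj)), ← Finset.sum_mul, sum_layers]
    simp
  · intro i _ j _ hij
    rcases lt_or_gt_of_ne hij with h | h
    · exact layer_disjoint _ _ h
    · exact (layer_disjoint _ _ h).symm

lemma coeff_one (d : ℕ) : (M * (C 2 * X + 1) ^ d).coeff 1 = 334 / 21 + 2 * (d : ℝ) := by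
  have h : (M * (C 2 * X + 1) ^ d).coeff 1 = (derivative (M * (C 2 * X + 1) ^ d)).eval 0 := by
    rw [← coeff_zero_eq_eval_zero, coeff_derivative]
    simp
  rw [h]
  simp [M, derivative_pow]
  ring

end WillsAux

theorem Wills_conjecture_fails (n : ℕ) (hn : 7 ≤ n) :
    ∃ P : Set (Fin n → ℝ), IsLatticePolytope P ∧ P = -P ∧
      {v : Fin n → ℤ | (fun i => (v i : ℝ)) ∈ interior P} = {0} ∧
      ∃ L : Polynomial ℝ, IsEhrhartPoly P L ∧ 2 * (n : ℝ) < L.coeff 1 := by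
  obtain ⟨d, rfl⟩ := Nat.exists_eq_add_of_le hn
  refine ⟨WillsAux.P (7 + d), ⟨WillsAux.V (7 + d), rfl⟩, WillsAux.neg_P _, WillsAux.interior_P _,
    _, WillsAux.ehrhart d, ?_⟩
  rw [WillsAux.coeff_one]
  push_cast
  linarith
end

section
/- Let a > 0 be a real number and let P ⊂ ℝ^n be an n-dimensional lattice polytope such that all n complex roots of its Ehrhart polynomial L_P have real part equal to -1/a. Then for every pair of integers 0 ≤ s < t ≤ n with (s,t) ≠ (n-1,n), equality holds in ℓ_t(P)/ℓ_s(P) ≤ a^{t-s} binom(n,t)/binom(n,s) if and only if L_P(k) = (ak+1)^n for all positive integers k. -/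
open MeasureTheory Polynomial Pointwise

/-! ### Polynomials with purely imaginary roots -/

lemma imag_roots_coeff (N : ℕ) : ∀ G : ℝ[X], G ≠ 0 → G.natDegree = N →
    (∀ z : ℂ, aeval z G = 0 → z.re = 0) →
    (∀ i, 0 ≤ G.leadingCoeff * G.coeff i) ∧
    ((∀ i, i + 2 = N → G.coeff i = 0) → G = C G.leadingCoeff * X ^ N) := by
  induction N using Nat.strong_induction_on with
  | _ N ih =>
  intro G hG hN hr
  rcases Nat.eq_zero_or_pos N with h0 | hpos
  · subst h0
    obtain ⟨c, rfl⟩ : ∃ c, G = C c := ⟨_, eq_C_of_natDegree_eq_zero hN⟩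
    refine ⟨fun i => ?_, fun _ => by simp⟩
    rw [leadingCoeff_C, coeff_C]
    split_ifs
    · exact mul_self_nonneg c
    · simp
  · have hdeg : 0 < (G.map (algebraMap ℝ ℂ)).degree := by
      rw [degree_map, ← natDegree_pos_iff_degree_pos]; omega
    obtain ⟨z, hz⟩ := Complex.exists_root hdeg
    have hz' : aeval z G = 0 := by
      rw [aeval_def, eval₂_eq_eval_map]; exact hz
    have hre := hr z hz'
    by_cases him : z.im = 0
    · have hz0 : z = 0 := Complex.ext hre him
      subst hz0
      have hX : X ∣ G := by
        rw [X_dvd_iff]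
        rw [aeval_def, eval₂_at_zero] at hz'
        simpa using hz'
      obtain ⟨H, rfl⟩ := hX
      have hH : H ≠ 0 := right_ne_zero_of_mul hG
      have hHd : H.natDegree + 1 = N := by rw [← hN, natDegree_X_mul hH]
      obtain ⟨h1, h2⟩ := ih H.natDegree (by omega) H hH rfl
        (fun w hw => hr w (by simp [hw]))
      have hl : (X * H).leadingCoeff = H.leadingCoeff := by simp
      rw [hl]
      refine ⟨fun i => ?_, fun hi => ?_⟩
      · cases i with
        | zero => simp
        | succ i => rw [coeff_X_mul]; exact h1 i
      · have := h2 (fun i hi' => by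
          have := hi (i + 1) (by omega)
          rwa [coeff_X_mul] at this)
        conv_lhs => rw [this]
        rw [← hHd, pow_succ]; ring
    · have hd := quadratic_dvd_of_aeval_eq_zero_im_ne_zero G hz' him
      rw [hre] at hd
      have hb : 0 < ‖z‖ ^ 2 := by
        have : z ≠ 0 := fun h => him (by simp [h])
        positivity
      set b := ‖z‖ ^ 2 with hbdef
      have hq : (X ^ 2 - C (2 * 0) * X + C b : ℝ[X]) = X ^ 2 + C b := by simp
      rw [hq] at hd
      obtain ⟨H, rfl⟩ := hd
      have hH : H ≠ 0 := right_ne_zero_of_mul hG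
      have hmon : (X ^ 2 + C b : ℝ[X]).Monic := monic_X_pow_add_C b two_ne_zero
      have hHd : H.natDegree + 2 = N := by
        rw [← hN, hmon.natDegree_mul' hH, natDegree_X_pow_add_C]; omega
      obtain ⟨h1, h2⟩ := ih H.natDegree (by omega) H hH rfl
        (fun w hw => hr w (by simp [hw]))
      have hl : ((X ^ 2 + C b) * H).leadingCoeff = H.leadingCoeff := by
        rw [leadingCoeff_mul, hmon.leadingCoeff, one_mul]
      have hlp : 0 < H.leadingCoeff * H.leadingCoeff :=
        mul_self_pos.2 (leadingCoeff_ne_zero.2 hH)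
      have key : ∀ i, 0 ≤ H.leadingCoeff * (X ^ 2 * H).coeff i := by
        intro i
        rw [coeff_X_pow_mul']
        split_ifs
        · exact h1 _
        · simp
      rw [hl]
      refine ⟨fun i => ?_, fun hi => ?_⟩
      · rw [add_mul, coeff_add, coeff_C_mul]
        have := key i
        have := mul_nonneg hb.le (h1 i)
        linarith
      · exfalso
        have h3 := hi H.natDegree hHd
        rw [add_mul, coeff_add, coeff_C_mul] at h3
        have h4 := key H.natDegree
        have h5 : H.leadingCoeff * (X ^ 2 * H).coeff H.natDegree
            + b * (H.leadingCoeff * H.leadingCoeff) = 0 := by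
          have : H.coeff H.natDegree = H.leadingCoeff := rfl
          rw [this] at h3
          linear_combination H.leadingCoeff * h3
        have := mul_pos hb hlp
        linarith

lemma choose_bracket {i n s t : ℕ} (hst : s ≤ t) (hi : i ≤ n) :
    i.choose t * n.choose s ≤ i.choose s * n.choose t := by
  have h1 := Nat.choose_mul (n := n) hst
  have h2 := Nat.choose_mul (n := i) hst
  have hpos := Nat.choose_pos hst
  have hm : (i - s).choose (t - s) ≤ (n - s).choose (t - s) :=
    Nat.choose_le_choose _ (by omega)
  refine Nat.le_of_mul_le_mul_right ?_ hpos
  calc i.choose t * n.choose s * t.choose s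
      = n.choose s * (i.choose t * t.choose s) := by ring
    _ = n.choose s * i.choose s * (i - s).choose (t - s) := by rw [h2]; ring
    _ ≤ n.choose s * i.choose s * (n - s).choose (t - s) := Nat.mul_le_mul_left _ hm
    _ = i.choose s * (n.choose s * (n - s).choose (t - s)) := by ring
    _ = i.choose s * n.choose t * t.choose s := by rw [← h1]; ring

lemma choose_bracket_strict {i n s t : ℕ} (hst : s < t) (htn : t ≤ n) (hi : i < n) (hs : s ≤ i) :
    i.choose t * n.choose s < i.choose s * n.choose t := by
  have h1 := Nat.choose_mul (n := n) hst.le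
  have h2 := Nat.choose_mul (n := i) hst.le
  have hm : (i - s).choose (t - s) < (n - s).choose (t - s) := by
    obtain ⟨k, hk⟩ : ∃ k, t - s = k + 1 := ⟨t - s - 1, by omega⟩
    obtain ⟨N, hN⟩ : ∃ N, n - s = N + 1 := ⟨n - s - 1, by omega⟩
    rw [hk, hN, Nat.choose_succ_succ']
    have a1 : (i - s).choose (k + 1) ≤ N.choose (k + 1) := Nat.choose_le_choose _ (by omega)
    have a2 : 0 < N.choose k := Nat.choose_pos (by omega)
    omega
  have hp1 : 0 < n.choose s * i.choose s :=
    Nat.mul_pos (Nat.choose_pos (by omega)) (Nat.choose_pos hs)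
  refine lt_of_mul_lt_mul_right (a := t.choose s) ?_ (Nat.zero_le _)
  calc i.choose t * n.choose s * t.choose s
      = n.choose s * (i.choose t * t.choose s) := by ring
    _ = n.choose s * i.choose s * (i - s).choose (t - s) := by rw [h2]; ring
    _ < n.choose s * i.choose s * (n - s).choose (t - s) := Nat.mul_lt_mul_of_pos_left hm hp1
    _ = i.choose s * (n.choose s * (n - s).choose (t - s)) := by ring
    _ = i.choose s * n.choose t * t.choose s := by rw [← h1]; ring

lemma coeff_comp_X_add_one (G : ℝ[X]) (s : ℕ) :
    (G.comp (X + C 1)).coeff s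
      = ∑ i ∈ Finset.range (G.natDegree + 1), G.coeff i * (i.choose s : ℝ) := by
  rw [← taylor_apply, taylor_coeff, hasseDeriv_apply, sum_over_range]
  · rw [eval_finsetSum]
    refine Finset.sum_congr rfl fun i _ => ?_
    simp; ring
  · simp

/-- The equality case for the coefficients. -/
lemma eq_case (n : ℕ) (G : ℝ[X]) (hG : G ≠ 0) (hN : G.natDegree = n)
    (hr : ∀ z : ℂ, aeval z G = 0 → z.re = 0)
    (s t : ℕ) (hst : s < t) (htn : t ≤ n) (hne : ¬(s = n - 1 ∧ t = n))
    (heq : (G.comp (X + C 1)).coeff t * (n.choose s : ℝ)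
      = (G.comp (X + C 1)).coeff s * (n.choose t : ℝ)) :
    G = C G.leadingCoeff * X ^ n := by
  obtain ⟨h1, h2⟩ := imag_roots_coeff n G hG hN hr
  apply h2
  intro j hj
  rw [coeff_comp_X_add_one, coeff_comp_X_add_one, hN, Finset.sum_mul, Finset.sum_mul] at heq
  have hsum : ∑ i ∈ Finset.range (n + 1), (G.leadingCoeff * G.coeff i) *
      ((i.choose s : ℝ) * n.choose t - i.choose t * n.choose s) = 0 := by
    have : ∀ i, (G.leadingCoeff * G.coeff i) *
      ((i.choose s : ℝ) * n.choose t - i.choose t * n.choose s) =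
      G.leadingCoeff * (G.coeff i * (i.choose s : ℝ) * n.choose t)
       - G.leadingCoeff * (G.coeff i * (i.choose t : ℝ) * n.choose s) := fun i => by ring
    simp_rw [this]
    rw [Finset.sum_sub_distrib, ← Finset.mul_sum, ← Finset.mul_sum, heq, sub_self]
  have hnn : ∀ i ∈ Finset.range (n + 1), 0 ≤ (G.leadingCoeff * G.coeff i) *
      ((i.choose s : ℝ) * n.choose t - i.choose t * n.choose s) := by
    intro i hi
    refine mul_nonneg (h1 i) ?_
    have := choose_bracket (i := i) (n := n) hst.le (by simpa [Nat.lt_succ_iff] using hi)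
    rw [sub_nonneg]
    exact_mod_cast this
  have h3 := (Finset.sum_eq_zero_iff_of_nonneg hnn).1 hsum j (by simp; omega)
  have h4 : (0 : ℝ) < (j.choose s : ℝ) * n.choose t - j.choose t * n.choose s := by
    have := choose_bracket_strict (i := j) hst htn (by omega) (by omega)
    rw [sub_pos]
    exact_mod_cast this
  have h5 := (mul_eq_zero.1 h3).resolve_right h4.ne'
  exact (mul_eq_zero.1 h5).resolve_left (leadingCoeff_ne_zero.2 hG)

/-! ### The constant term of the Ehrhart polynomial -/

/-- Lexicographic positivity of a vector, with respect to a list of coordinates. -/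
def LexPos {ι : Type} : List ι → (ι → ℝ) → Prop
  | [], _ => False
  | i :: l, d => 0 < d i ∨ (d i = 0 ∧ LexPos l d)

lemma LexPos.smul {ι : Type} {l : List ι} {d : ι → ℝ} (h : LexPos l d) {e : ℝ} (he : 0 < e) :
    LexPos l (e • d) := by
  induction l with
  | nil => exact h
  | cons i l ih =>
    rcases h with h | ⟨h, h'⟩
    · left; simp only [Pi.smul_apply, smul_eq_mul]; positivity
    · right; exact ⟨by simp [h], ih h'⟩

lemma lexPos_total {ι : Type} (l : List ι) (d : ι → ℝ) (hd : ∃ i ∈ l, d i ≠ 0) :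
    LexPos l d ∨ LexPos l (-d) := by
  induction l with
  | nil => simp at hd
  | cons i l ih =>
    rcases lt_trichotomy (d i) 0 with h | h | h
    · right; left; simpa using h
    · have : ∃ j ∈ l, d j ≠ 0 := by
        obtain ⟨j, hj, hj'⟩ := hd
        rcases List.mem_cons.1 hj with rfl | hj
        · exact absurd h hj'
        · exact ⟨j, hj, hj'⟩
      rcases ih this with h' | h'
      · left; right; exact ⟨h, h'⟩
      · right; right; exact ⟨by simp [h], h'⟩
    · left; left; exact h

lemma exists_lexMax {ι : Type} [Fintype ι] (l : List ι) :
    ∀ F : Set (ι → ℝ), IsCompact F → F.Nonempty →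
      ∃ x ∈ F, ∀ y ∈ F, ¬ LexPos l (y - x) := by
  induction l with
  | nil =>
    intro F _ ⟨x, hx⟩
    exact ⟨x, hx, fun _ _ h => h⟩
  | cons i l ih =>
    intro F hF hne
    obtain ⟨x₀, hx₀, hmax⟩ := hF.exists_isMaxOn hne (continuous_apply i).continuousOn
    obtain ⟨x, ⟨hxF, hxi⟩, hx⟩ := ih (F ∩ {x | x i = x₀ i})
      (hF.inter_right (isClosed_eq (continuous_apply i) continuous_const)) ⟨x₀, hx₀, rfl⟩
    refine ⟨x, hxF, fun y hy h => ?_⟩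
    have hxi' : x i = x₀ i := hxi
    have hyi : y i ≤ x₀ i := hmax hy
    rcases h with h | ⟨h, h'⟩
    · simp only [Pi.sub_apply] at h; linarith
    · simp only [Pi.sub_apply] at h
      exact hx y ⟨hy, by simp only [Set.mem_ofPred_eq]; linarith⟩ h'

section Cone

variable {n m : ℕ} (v : Fin (m + 1) → Fin n → ℤ)

/-- Selected (lexicographically maximal) coefficient vectors. -/
def selected : Set (Fin (m + 1) → ℝ) :=
  {w | (∀ i, 0 ≤ w i) ∧ ∀ d : Fin (m + 1) → ℝ, ∑ i, d i = 0 →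
    (∀ j, ∑ i, d i * (v i j : ℝ) = 0) → LexPos (List.finRange (m + 1)) d →
    ∃ i, w i = 0 ∧ d i < 0}

/-- Selected coefficient vectors of height `k` representing lattice points. -/
def level (k : ℕ) : Set (Fin (m + 1) → ℝ) :=
  {w | w ∈ selected v ∧ ∑ i, w i = k ∧
    ∃ x : Fin n → ℤ, ∀ j, ∑ i, w i * (v i j : ℝ) = x j}

variable {v}

lemma selected_hereditary {w u : Fin (m + 1) → ℝ} (hw : w ∈ selected v) (hu : ∀ i, 0 ≤ u i)
    (h : ∀ i, i ≠ 0 → w i = 0 → u i = 0) : u ∈ selected v := by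
  refine ⟨hu, fun d hd hdv hl => ?_⟩
  obtain ⟨i, hi, hdi⟩ := hw.2 d hd hdv hl
  have h0 : 0 ≤ d 0 := by
    rw [List.finRange_succ] at hl
    rcases hl with hl | ⟨hl, _⟩
    · exact hl.le
    · exact hl.ge
  have : i ≠ 0 := by rintro rfl; linarith
  exact ⟨i, h i this hi, hdi⟩

lemma selected_unique {w u : Fin (m + 1) → ℝ} (hw : w ∈ selected v) (hu : u ∈ selected v)
    (hs : ∑ i, w i = ∑ i, u i)
    (hv : ∀ j, ∑ i, w i * (v i j : ℝ) = ∑ i, u i * (v i j : ℝ)) : w = u := by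
  by_contra hne
  have aux : ∀ w u : Fin (m + 1) → ℝ, w ∈ selected v → u ∈ selected v →
    ∑ i, w i = ∑ i, u i → (∀ j, ∑ i, w i * (v i j : ℝ) = ∑ i, u i * (v i j : ℝ)) →
    ¬ LexPos (List.finRange (m + 1)) (w - u) := by
    intro w u hw hu hs hv hl
    obtain ⟨i, hi, hi'⟩ := hu.2 (w - u) (by simp [hs])
      (by intro j; simp [sub_mul, hv j]) hl
    have := hw.1 i
    simp only [Pi.sub_apply] at hi'
    linarith
  have hex : ∃ i ∈ List.finRange (m + 1), (w - u) i ≠ 0 := by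
    by_contra hcon
    push Not at hcon
    apply hne
    ext i
    have := hcon i (by simp)
    simp only [Pi.sub_apply] at this
    linarith
  rcases lexPos_total _ _ hex with h | h
  · exact aux w u hw hu hs hv h
  · rw [neg_sub] at h
    exact aux u w hu hw hs.symm (fun j => (hv j).symm) h

lemma selected_exists (w : Fin (m + 1) → ℝ) (hw : ∀ i, 0 ≤ w i) :
    ∃ u ∈ selected v, ∑ i, u i = ∑ i, w i ∧
      ∀ j, ∑ i, u i * (v i j : ℝ) = ∑ i, w i * (v i j : ℝ) := by
  set F : Set (Fin (m + 1) → ℝ) := {u | (∀ i, 0 ≤ u i) ∧ ∑ i, u i = ∑ i, w i ∧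
      ∀ j, ∑ i, u i * (v i j : ℝ) = ∑ i, w i * (v i j : ℝ)} with hF
  have hcl : IsClosed F := by
    have h1 : IsClosed {u : Fin (m + 1) → ℝ | ∀ i, 0 ≤ u i} := by
      simp only [Set.ofPred_forall]
      exact isClosed_iInter fun i => isClosed_le continuous_const (continuous_apply i)
    have h2 : IsClosed {u : Fin (m + 1) → ℝ | ∑ i, u i = ∑ i, w i} :=
      isClosed_eq (by fun_prop) continuous_const
    have h3 : IsClosed {u : Fin (m + 1) → ℝ |
        ∀ j, ∑ i, u i * (v i j : ℝ) = ∑ i, w i * (v i j : ℝ)} := by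
      simp only [Set.ofPred_forall]
      exact isClosed_iInter fun i => isClosed_eq (by fun_prop) continuous_const
    exact h1.inter (h2.inter h3)
  have hcomp : IsCompact F := by
    refine IsCompact.of_isClosed_subset
      (isCompact_univ_pi (fun _ : Fin (m + 1) => isCompact_Icc (a := (0 : ℝ)) (b := ∑ i, w i)))
      hcl ?_
    intro u hu i _
    refine ⟨hu.1 i, ?_⟩
    rw [← hu.2.1]
    exact Finset.single_le_sum (fun j _ => hu.1 j) (Finset.mem_univ i)
  obtain ⟨u, hu, hmax⟩ := exists_lexMax (List.finRange (m + 1)) F hcomp ⟨w, hw, rfl, fun _ => rfl⟩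
  refine ⟨u, ⟨hu.1, fun d hd hdv hl => ?_⟩, hu.2⟩
  by_contra hcon
  push Not at hcon
  have hev : ∀ i, ∀ᶠ e in nhdsWithin (0 : ℝ) (Set.Ioi 0), 0 ≤ u i + e * d i := by
    intro i
    rcases (hu.1 i).eq_or_lt with h | h
    · filter_upwards [self_mem_nhdsWithin] with e he
      have := hcon i h.symm
      have he' : 0 < e := he
      rw [← h]; positivity
    · have : Filter.Tendsto (fun e : ℝ => u i + e * d i) (nhds 0) (nhds (u i + 0 * d i)) :=
        Continuous.tendsto (by fun_prop) 0
      rw [zero_mul, add_zero] at this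
      have := this.eventually (lt_mem_nhds h)
      exact (this.filter_mono nhdsWithin_le_nhds).mono fun _ h => h.le
  obtain ⟨e, he, hepos⟩ := ((Filter.eventually_all.2 hev).and self_mem_nhdsWithin).exists
  have hepos' : (0 : ℝ) < e := hepos
  refine hmax (u + e • d) ⟨fun i => by simpa using he i, ?_, fun j => ?_⟩ ?_
  · simp [Finset.sum_add_distrib, ← Finset.mul_sum, hd, hu.2.1]
  · have := hdv j
    simp only [Pi.add_apply, Pi.smul_apply, smul_eq_mul, add_mul, Finset.sum_add_distrib,
      mul_assoc, ← Finset.mul_sum, this, hu.2.2 j]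
    simp
  · rw [add_sub_cancel_left]
    exact hl.smul hepos'

variable (v)

/-- The real vectors of the vertices. -/
def realVec (i : Fin (m + 1)) : Fin n → ℝ := fun j => (v i j : ℝ)

lemma mem_smul_hull (k : ℕ) (x : Fin n → ℝ) :
    x ∈ (k : ℝ) • convexHull ℝ (Set.range (realVec v)) ↔
      ∃ w : Fin (m + 1) → ℝ, (∀ i, 0 ≤ w i) ∧ ∑ i, w i = k ∧
        ∀ j, ∑ i, w i * (v i j : ℝ) = x j := by
  constructor
  · rintro ⟨y, hy, rfl⟩
    rw [convexHull_range_eq_exists_affineCombination] at hy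
    obtain ⟨s, w, hw0, hw1, rfl⟩ := hy
    rw [Finset.affineCombination_eq_linear_combination _ _ _ hw1]
    refine ⟨fun i => if i ∈ s then k * w i else 0, fun i => ?_, ?_, fun j => ?_⟩
    · dsimp only
      split_ifs with h
      · exact mul_nonneg (Nat.cast_nonneg _) (hw0 i h)
      · exact le_rfl
    · rw [Finset.sum_ite_mem, Finset.univ_inter, ← Finset.mul_sum, hw1, mul_one]
    · simp only [ite_mul, zero_mul, Finset.sum_ite_mem, Finset.univ_inter]
      simp [Finset.mul_sum, realVec, mul_assoc]
  · rintro ⟨w, hw0, hw1, hw⟩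
    rcases Nat.eq_zero_or_pos k with rfl | hk
    · have hz : ∀ i, w i = 0 := by
        intro i
        have := (Finset.sum_eq_zero_iff_of_nonneg (fun i _ => hw0 i)).1 (by simpa using hw1) i
          (Finset.mem_univ i)
        exact this
      refine ⟨realVec v 0, subset_convexHull _ _ ⟨0, rfl⟩, ?_⟩
      ext j
      rw [← hw j]
      simp [hz]
    · have hk' : (0 : ℝ) < k := by exact_mod_cast hk
      refine ⟨∑ i, ((k : ℝ)⁻¹ * w i) • realVec v i, ?_, ?_⟩
      · refine (convex_convexHull ℝ _).sum_mem (fun i _ => mul_nonneg (by positivity) (hw0 i)) ?_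
          (fun i _ => subset_convexHull _ _ ⟨i, rfl⟩)
        rw [← Finset.mul_sum, hw1]; field_simp
      · ext j
        rw [← hw j]
        simp only [Pi.smul_apply, Finset.sum_apply, smul_eq_mul, realVec, Finset.mul_sum]
        refine Finset.sum_congr rfl fun i _ => ?_
        field_simp

/-- The lattice points of the `k`-th dilate. -/
def latPts (k : ℕ) : Set (Fin n → ℤ) :=
  {x | (fun i => (x i : ℝ)) ∈ (k : ℝ) • convexHull ℝ (Set.range (realVec v))}

lemma latPts_finite (k : ℕ) : (latPts v k).Finite := by
  set B : ℝ := ∑ i, ∑ j, |(v i j : ℝ)| with hB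
  refine Set.Finite.subset (Set.Finite.pi (fun _ : Fin n =>
    Set.finite_Icc (-⌈(k : ℝ) * B⌉) ⌈(k : ℝ) * B⌉)) ?_
  intro x hx j _
  obtain ⟨w, hw0, hw1, hw⟩ := (mem_smul_hull v k _).1 hx
  have hle : |(x j : ℝ)| ≤ k * B := by
    rw [← hw j]
    calc |∑ i, w i * (v i j : ℝ)| ≤ ∑ i, |w i * (v i j : ℝ)| := Finset.abs_sum_le_sum_abs _ _
      _ ≤ ∑ i, w i * B := by
        refine Finset.sum_le_sum fun i _ => ?_
        rw [abs_mul, abs_of_nonneg (hw0 i)]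
        refine mul_le_mul_of_nonneg_left ?_ (hw0 i)
        calc |(v i j : ℝ)| ≤ ∑ j, |(v i j : ℝ)| :=
              Finset.single_le_sum (f := fun j => |(v i j : ℝ)|)
                (fun _ _ => abs_nonneg _) (Finset.mem_univ j)
          _ ≤ B := Finset.single_le_sum (f := fun i => ∑ j, |(v i j : ℝ)|)
                (fun _ _ => Finset.sum_nonneg fun _ _ => abs_nonneg _) (Finset.mem_univ i)
      _ = k * B := by rw [← Finset.sum_mul, hw1]
  have h2 : |(x j : ℝ)| ≤ (⌈(k : ℝ) * B⌉ : ℝ) := hle.trans (Int.le_ceil _)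
  rw [abs_le] at h2
  constructor
  · exact_mod_cast h2.1
  · exact_mod_cast h2.2

lemma exists_bijOn (k : ℕ) : ∃ f : (Fin (m + 1) → ℝ) → (Fin n → ℤ),
    Set.BijOn f (level v k) (latPts v k) := by
  classical
  refine ⟨fun w j => ⌊∑ i, w i * (v i j : ℝ)⌋, ?_, ?_, ?_⟩
  · rintro w ⟨hw, hs, x, hx⟩
    refine (mem_smul_hull v k _).2 ⟨w, hw.1, hs, fun j => ?_⟩
    simp [hx j]
  · rintro w ⟨hw, hs, x, hx⟩ u ⟨hu, hs', y, hy⟩ hwu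
    refine selected_unique hw hu (hs.trans hs'.symm) fun j => ?_
    have := congrFun hwu j
    simp only [hx j, hy j, Int.floor_intCast] at this
    rw [hx j, hy j, this]
  · intro x hx
    obtain ⟨w, hw0, hw1, hw⟩ := (mem_smul_hull v k _).1 hx
    obtain ⟨u, hu, hus, huv⟩ := selected_exists (v := v) w hw0
    refine ⟨u, ⟨hu, hus.trans hw1, x, fun j => (huv j).trans (hw j)⟩, ?_⟩
    ext j
    simp only [huv j, hw j, Int.floor_intCast]

lemma level_finite (k : ℕ) : (level v k).Finite := by
  obtain ⟨f, hf⟩ := exists_bijOn v k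
  exact hf.finite_iff_finite.2 (latPts_finite v k)

lemma level_ncard (k : ℕ) : (latPts v k).ncard = (level v k).ncard := by
  obtain ⟨f, hf⟩ := exists_bijOn v k
  rw [← hf.image_eq, hf.injOn.ncard_image]

/-- Integral part of a coefficient vector (floor at `0`, ceiling minus one elsewhere). -/
noncomputable def intPart (w : Fin (m + 1) → ℝ) (i : Fin (m + 1)) : ℕ :=
  if i = 0 then ⌊w i⌋₊ else ⌈w i⌉₊ - 1

/-- Fractional part of a coefficient vector. -/
noncomputable def fracPart (w : Fin (m + 1) → ℝ) (i : Fin (m + 1)) : ℝ :=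
  w i - intPart w i

lemma fracPart_zero {w : Fin (m + 1) → ℝ} (hw : ∀ i, 0 ≤ w i) :
    0 ≤ fracPart w 0 ∧ fracPart w 0 < 1 := by
  simp only [fracPart, intPart, if_true]
  have h1 := Nat.floor_le (hw 0)
  have h2 := Nat.lt_floor_add_one (w 0)
  constructor <;> linarith

lemma fracPart_of_eq_zero {w : Fin (m + 1) → ℝ} {i : Fin (m + 1)} (hi : i ≠ 0) (h : w i = 0) :
    intPart w i = 0 ∧ fracPart w i = 0 := by
  simp [fracPart, intPart, hi, h]

lemma fracPart_of_pos {w : Fin (m + 1) → ℝ} {i : Fin (m + 1)} (hi : i ≠ 0) (h : 0 < w i) :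
    0 < fracPart w i ∧ fracPart w i ≤ 1 := by
  simp only [fracPart, intPart, if_neg hi]
  have h0 : 0 < ⌈w i⌉₊ := Nat.ceil_pos.2 h
  rw [Nat.cast_sub (by omega)]
  have h1 := Nat.le_ceil (w i)
  have h2 := Nat.ceil_lt_add_one h.le
  push_cast
  constructor <;> linarith

lemma fracPart_nonneg {w : Fin (m + 1) → ℝ} (hw : ∀ i, 0 ≤ w i) (i : Fin (m + 1)) :
    0 ≤ fracPart w i ∧ fracPart w i ≤ 1 := by
  by_cases hi : i = 0
  · subst hi; exact ⟨(fracPart_zero hw).1, (fracPart_zero hw).2.le⟩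
  · rcases (hw i).eq_or_lt with h | h
    · rw [(fracPart_of_eq_zero hi h.symm).2]; simp
    · exact ⟨(fracPart_of_pos hi h).1.le, (fracPart_of_pos hi h).2⟩

lemma intPart_add {b : Fin (m + 1) → ℝ} {c : Fin (m + 1) → ℕ} (hb : ∀ i, 0 ≤ b i)
    (h0 : b 0 < 1) (h1 : ∀ i, b i ≤ 1) (hc : ∀ i, i ≠ 0 → b i = 0 → c i = 0) :
    intPart (fun i => b i + c i) = c := by
  ext i
  unfold intPart
  split_ifs with hi
  · subst hi
    rw [Nat.floor_add_natCast (hb 0), Nat.floor_eq_zero.2 h0, zero_add]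
  · rcases (hb i).eq_or_lt with h | h
    · simp [← h, hc i hi h.symm]
    · rw [Nat.ceil_add_natCast h.le]
      have : ⌈b i⌉₊ = 1 := by
        refine le_antisymm (Nat.ceil_le.2 (by simpa using h1 i)) (Nat.ceil_pos.2 h)
      omega

/-- Boxes. -/
noncomputable def boxes : Finset (Fin (m + 1) → ℝ) := by
  classical
  exact ((Finset.range (m + 2)).biUnion fun h => (level_finite v h).toFinset).filter
    (fun b => b 0 < 1 ∧ ∀ i, b i ≤ 1)

lemma mem_boxes {b : Fin (m + 1) → ℝ} : b ∈ boxes v ↔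
    (∃ h, h < m + 2 ∧ b ∈ level v h) ∧ b 0 < 1 ∧ ∀ i, b i ≤ 1 := by
  classical
  simp [boxes]

lemma fracPart_mem_boxes {k : ℕ} {w : Fin (m + 1) → ℝ} (hw : w ∈ level v k) :
    fracPart w ∈ boxes v := by
  obtain ⟨hsel, hs, x, hx⟩ := hw
  have hfr := fracPart_nonneg hsel.1
  refine (mem_boxes v).2 ⟨?_, (fracPart_zero hsel.1).2, fun i => (hfr i).2⟩
  have hsum : ∑ i, fracPart w i = (k : ℝ) - ((∑ i, intPart w i : ℕ) : ℝ) := by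
    simp [fracPart, Finset.sum_sub_distrib, hs]
  have hnn : 0 ≤ ∑ i, fracPart w i := Finset.sum_nonneg fun i _ => (hfr i).1
  have hle : ((∑ i, intPart w i : ℕ) : ℝ) ≤ k := by linarith
  have hle' : (∑ i, intPart w i) ≤ k := by exact_mod_cast hle
  have hsum' : ∑ i, fracPart w i = ((k - ∑ i, intPart w i : ℕ) : ℝ) := by
    rw [hsum, Nat.cast_sub hle']
  refine ⟨k - ∑ i, intPart w i, ?_, ?_, hsum', fun j => x j - ∑ i, intPart w i * v i j, ?_⟩
  · have : ∑ i, fracPart w i ≤ ∑ _i : Fin (m + 1), (1 : ℝ) :=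
      Finset.sum_le_sum fun i _ => (hfr i).2
    rw [hsum'] at this
    simp only [Finset.sum_const, Finset.card_univ, Fintype.card_fin, nsmul_eq_mul, mul_one] at this
    have h3 : k - ∑ i, intPart w i ≤ m + 1 := by exact_mod_cast this
    omega
  · exact selected_hereditary hsel (fun i => (hfr i).1)
      fun i hi h => (fracPart_of_eq_zero hi h).2
  · intro j
    simp [fracPart, sub_mul, Finset.sum_sub_distrib, hx j]

/-- Nonzero support of a box. -/
noncomputable def boxSupp (b : Fin (m + 1) → ℝ) : Finset (Fin (m + 1)) := by
  classical
  exact Finset.univ.filter (fun i => i ≠ 0 ∧ b i ≠ 0)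

lemma mem_boxSupp {b : Fin (m + 1) → ℝ} {i : Fin (m + 1)} :
    i ∈ boxSupp b ↔ i ≠ 0 ∧ b i ≠ 0 := by
  classical
  simp [boxSupp]

lemma height_le {h : ℕ} {b : Fin (m + 1) → ℝ} (hb : b ∈ boxes v) (hh : b ∈ level v h) :
    h ≤ (boxSupp b).card := by
  classical
  obtain ⟨-, h0, h1⟩ := (mem_boxes v).1 hb
  have h2 : ∑ i, b i = b 0 + ∑ i ∈ boxSupp b, b i := by
    have hn : (0 : Fin (m + 1)) ∉ boxSupp b := by simp [mem_boxSupp]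
    rw [← Finset.sum_insert hn]
    symm
    refine Finset.sum_subset (Finset.subset_univ _) fun i _ hi => ?_
    simp only [Finset.mem_insert, mem_boxSupp, not_or, not_and, not_not] at hi
    exact hi.2 hi.1
  have h3 : ∑ i ∈ boxSupp b, b i ≤ (boxSupp b).card := by
    have := Finset.sum_le_card_nsmul (boxSupp b) b 1 (fun i _ => h1 i)
    simpa using this
  have h4 : (h : ℝ) < (boxSupp b).card + 1 := by
    rw [← hh.2.1, h2]; linarith
  have : h < (boxSupp b).card + 1 := by exact_mod_cast h4
  omega

lemma fiber_card {h k : ℕ} {b : Fin (m + 1) → ℝ} (hb : b ∈ boxes v) (hh : b ∈ level v h) :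
    {w ∈ level v k | fracPart w = b}.ncard
      = (k + ((boxSupp b).card - h)).choose (boxSupp b).card := by
  classical
  have hr := height_le v hb hh
  obtain ⟨-, h0, h1⟩ := (mem_boxes v).1 hb
  set r := (boxSupp b).card with hrdef
  have hsumw : ∀ w ∈ level v k, fracPart w = b → (∑ i, intPart w i) + h = k := by
    intro w hw hwb
    have e1 := hh.2.1
    rw [← hwb] at e1
    simp only [fracPart, Finset.sum_sub_distrib, hw.2.1] at e1
    have : ((∑ i, intPart w i : ℕ) : ℝ) + h = k := by push_cast; linarith
    exact_mod_cast this
  by_cases hk : h ≤ k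
  · have hn : (0 : Fin (m + 1)) ∉ boxSupp b := by simp [mem_boxSupp]
    have heq : {w ∈ level v k | fracPart w = b} =
        (fun (c : Fin (m + 1) →₀ ℕ) (i : Fin (m + 1)) => b i + (c i : ℝ)) ''
          (Finset.finsuppAntidiag (insert 0 (boxSupp b)) (k - h) : Set (Fin (m + 1) →₀ ℕ)) := by
      ext w
      constructor
      · rintro ⟨hw, hwb⟩
        have hsupp : ∀ i, i ∉ insert 0 (boxSupp b) → intPart w i = 0 := by
          intro i hi
          simp only [Finset.mem_insert, mem_boxSupp, not_or, not_and, not_not] at hi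
          have hbi := hi.2 hi.1
          rcases (hw.1.1 i).eq_or_lt with hz | hz
          · exact (fracPart_of_eq_zero hi.1 hz.symm).1
          · have := (fracPart_of_pos hi.1 hz).1
            rw [hwb, hbi] at this
            exact absurd this (lt_irrefl _)
        refine ⟨Finsupp.equivFunOnFinite.symm (intPart w), ?_, ?_⟩
        · simp only [Finset.mem_coe, Finset.mem_finsuppAntidiag]
          constructor
          · have e2 : (insert 0 (boxSupp b)).sum (intPart w) = ∑ i, intPart w i :=
              Finset.sum_subset (Finset.subset_univ _) fun i _ hi => hsupp i hi
            have := hsumw w hw hwb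
            change (insert 0 (boxSupp b)).sum (intPart w) = k - h
            rw [e2]
            omega
          · intro i hi
            by_contra hcon
            rw [Finsupp.mem_support_iff] at hi
            exact hi (by simpa using hsupp i hcon)
        · ext i
          rw [← hwb]
          simp [fracPart]
      · rintro ⟨c, hc, rfl⟩
        simp only [Finset.mem_coe, Finset.mem_finsuppAntidiag] at hc
        have hc0 : ∀ i, i ≠ 0 → b i = 0 → c i = 0 := by
          intro i hi hbi
          by_contra hcon
          have := hc.2 (Finsupp.mem_support_iff.2 hcon)
          simp only [Finset.mem_insert, mem_boxSupp] at this
          rcases this with h | h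
          · exact hi h
          · exact h.2 hbi
        have hcs : ∑ i, c i = k - h := by
          rw [← hc.1]
          symm
          refine Finset.sum_subset (Finset.subset_univ _) fun i _ hi => ?_
          by_contra hcon
          exact hi (hc.2 (Finsupp.mem_support_iff.2 hcon))
        obtain ⟨hsel, hsum, x, hx⟩ := hh
        refine ⟨⟨?_, ?_, fun j => x j + ∑ i, (c i : ℤ) * v i j, ?_⟩, ?_⟩
        · refine selected_hereditary hsel (fun i => add_nonneg (hsel.1 i) (Nat.cast_nonneg _)) ?_
          intro i hi hbi
          simp [hbi, hc0 i hi hbi]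
        · rw [Finset.sum_add_distrib, hsum, ← Nat.cast_sum, hcs, Nat.cast_sub hk]
          ring
        · intro j
          simp [add_mul, Finset.sum_add_distrib, hx j]
        · ext i
          unfold fracPart
          rw [intPart_add (c := c) hsel.1 h0 h1 hc0]
          simp
    rw [heq, Set.InjOn.ncard_image, Set.ncard_coe_finset,
      Finset.card_finsuppAntidiag_nat_eq_choose, Finset.card_insert_of_notMem hn, ← hrdef]
    · have e1 : r + 1 + (k - h) - 1 = k + (r - h) := by omega
      rw [e1]
      apply Nat.choose_symm_of_eq_add
      omega
    · intro c _ d _ hcd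
      ext i
      have := congrFun hcd i
      simpa using this
  · rw [Nat.choose_eq_zero_of_lt (by omega)]
    have : {w ∈ level v k | fracPart w = b} = ∅ := by
      ext w
      simp only [Set.mem_empty_iff_false, iff_false]
      rintro ⟨hw, hwb⟩
      have := hsumw w hw hwb
      omega
    rw [this, Set.ncard_empty]

lemma exists_poly_choose (r d : ℕ) :
    ∃ q : ℝ[X], ∀ k : ℕ, q.eval (k : ℝ) = ((k + d).choose r : ℝ) := by
  refine ⟨C ((r.factorial : ℝ)⁻¹) * (descPochhammer ℝ r).comp (X + C (d : ℝ)), fun k => ?_⟩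
  have : (k : ℝ) + d = ((k + d : ℕ) : ℝ) := by push_cast; ring
  have hf : (r.factorial : ℝ) ≠ 0 := by exact_mod_cast r.factorial_ne_zero
  rw [eval_mul, eval_C, eval_comp, eval_add, eval_X, eval_C, this,
    descPochhammer_eval_eq_descFactorial, Nat.descFactorial_eq_factorial_mul_choose]
  push_cast
  field_simp

lemma exists_poly : ∃ q : ℝ[X], ∀ k : ℕ, q.eval (k : ℝ) = ((latPts v k).ncard : ℝ) := by
  classical
  have hbox : ∀ b : boxes v, ∃ q : ℝ[X], ∀ k : ℕ,
      q.eval (k : ℝ) = ({w ∈ level v k | fracPart w = b.1}.ncard : ℝ) := by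
    rintro ⟨b, hb⟩
    obtain ⟨h, -, hh⟩ := ((mem_boxes v).1 hb).1
    obtain ⟨q, hq⟩ := exists_poly_choose (boxSupp b).card ((boxSupp b).card - h)
    exact ⟨q, fun k => by rw [hq, fiber_card v hb hh]⟩
  choose q hq using hbox
  refine ⟨∑ b, q b, fun k => ?_⟩
  rw [eval_finsetSum, level_ncard]
  simp_rw [hq]
  have h1 : (level v k).ncard = (level_finite v k).toFinset.card :=
    Set.ncard_eq_toFinset_card _ _
  have h2 := Finset.card_eq_sum_card_fiberwise (f := fracPart)
    (s := (level_finite v k).toFinset) (t := boxes v)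
    (fun w hw => fracPart_mem_boxes v ((level_finite v k).mem_toFinset.1 hw))
  rw [h1, h2, ← Finset.sum_coe_sort (boxes v)]
  push_cast
  refine Finset.sum_congr rfl fun b _ => ?_
  rw [← Set.ncard_coe_finset]
  congr 2
  ext w
  simp

lemma latPts_zero : (latPts v 0).ncard = 1 := by
  have : latPts v 0 = {0} := by
    ext x
    simp only [Set.mem_singleton_iff]
    constructor
    · intro hx
      obtain ⟨y, -, hy⟩ := hx
      ext j
      have := congrFun hy j
      simpa using this.symm
    · rintro rfl
      exact ⟨realVec v 0, subset_convexHull _ _ ⟨0, rfl⟩, by ext j; simp⟩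
  rw [this, Set.ncard_singleton]

end Cone

/-- The constant term of an Ehrhart polynomial is one. -/
lemma ehrhart_eval_zero {n : ℕ} {P : Set (Fin n → ℝ)} (hP : IsLatticePolytope P)
    (hne : P.Nonempty) {L : ℝ[X]} (hL : IsEhrhartPoly P L) : L.eval 0 = 1 := by
  obtain ⟨V, hV⟩ := hP
  have hVne : V.Nonempty := by
    rw [Finset.nonempty_iff_ne_empty]
    rintro rfl
    rw [hV] at hne
    simp at hne
  obtain ⟨m, hm⟩ : ∃ m, V.card = m + 1 := ⟨V.card - 1, by have := hVne.card_pos; omega⟩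
  let e := (V.equivFinOfCardEq hm).symm
  let v : Fin (m + 1) → Fin n → ℤ := fun i => (e i).1
  have hP' : P = convexHull ℝ (Set.range (realVec v)) := by
    rw [hV]
    congr 1
    ext x
    constructor
    · rintro ⟨y, hy, rfl⟩
      exact ⟨e.symm ⟨y, hy⟩, by ext j; simp [realVec, v]⟩
    · rintro ⟨i, rfl⟩
      exact ⟨(e i).1, (e i).2, rfl⟩
  obtain ⟨q, hq⟩ := exists_poly v
  have hLq : L = q := by
    refine eq_of_infinite_eval_eq _ _ ?_
    refine Set.Infinite.mono (s := (fun k : ℕ => ((k + 1 : ℕ) : ℝ)) '' Set.univ) ?_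
      (Set.infinite_univ.image ?_)
    · rintro _ ⟨k, -, rfl⟩
      have h1 := hL (k + 1) (by omega)
      have h2 := hq (k + 1)
      simp only [Set.mem_ofPred_eq]
      rw [h1, h2, hP']
      rfl
    · intro a _ b _ hab
      have : a + 1 = b + 1 := Nat.cast_injective (R := ℝ) hab
      omega
  have := hq 0
  rw [latPts_zero] at this
  rw [hLq]
  simpa using this

theorem ehrhart_coeff_ratio_eq_iff (n : ℕ) (a : ℝ) (ha : 0 < a) (P : Set (Fin n → ℝ))
    (hP : IsLatticePolytope P) (hfull : (interior P).Nonempty)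
    (L : Polynomial ℝ) (hL : IsEhrhartPoly P L) (hdeg : L.natDegree = n)
    (hroots : ∀ z ∈ (L.map (algebraMap ℝ ℂ)).roots, z.re = -1 / a)
    (s t : ℕ) (hst : s < t) (htn : t ≤ n) (hne : ¬(s = n - 1 ∧ t = n)) :
    L.coeff t / L.coeff s = a ^ (t - s) * (n.choose t : ℝ) / (n.choose s : ℝ) ↔
      ∀ k : ℕ, 0 < k → L.eval (k : ℝ) = (a * k + 1) ^ n := by
  have ha' : a ≠ 0 := ha.ne'
  have hL0 : L.eval 0 = 1 := ehrhart_eval_zero hP (hfull.mono interior_subset) hL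
  have hLne : L ≠ 0 := by
    rintro rfl
    simp at hL0
  have hCs : (n.choose s : ℝ) ≠ 0 := by
    exact_mod_cast (Nat.choose_pos (by omega : s ≤ n)).ne'
  have hCt : (n.choose t : ℝ) ≠ 0 := by
    exact_mod_cast (Nat.choose_pos htn).ne'
  have hpow : a ^ t = a ^ (t - s) * a ^ s := by rw [← pow_add]; congr 1; omega
  constructor
  · intro heq
    have hs0 : L.coeff s ≠ 0 := by
      intro h
      rw [h, div_zero] at heq
      have : a ^ (t - s) * (n.choose t : ℝ) / (n.choose s : ℝ) ≠ 0 :=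
        div_ne_zero (mul_ne_zero (pow_ne_zero _ ha') hCt) hCs
      exact this heq.symm
    set G : ℝ[X] := L.comp (C a⁻¹ * X - C a⁻¹) with hGdef
    have hcomp : G.comp (X + C 1) = L.comp (C a⁻¹ * X) := by
      rw [hGdef, comp_assoc]
      congr 1
      simp
      ring
    have hlin : (C a⁻¹ * X - C a⁻¹ : ℝ[X]).natDegree = 1 := by
      rw [sub_eq_add_neg, ← C_neg]
      exact natDegree_linear (inv_ne_zero ha')
    have hN : G.natDegree = n := by rw [hGdef, natDegree_comp, hlin, hdeg, mul_one]
    have hG : G ≠ 0 := by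
      intro h
      have h1 : G.eval 1 = 0 := by rw [h]; simp
      rw [hGdef, eval_comp] at h1
      simp [hL0] at h1
    have hr : ∀ z : ℂ, aeval z G = 0 → z.re = 0 := by
      intro z hz
      have h1 : aeval ((((a⁻¹ : ℝ) : ℂ)) * z - ((a⁻¹ : ℝ) : ℂ)) L = 0 := by
        rw [hGdef, aeval_comp] at hz
        simpa using hz
      have h2 := hroots _ ((mem_roots (Polynomial.map_ne_zero hLne)).2 (by
        rw [IsRoot.def, eval_map_algebraMap]; exact h1))
      rw [Complex.sub_re, Complex.re_ofReal_mul, Complex.ofReal_re] at h2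
      field_simp at h2
      linarith
    have hfin := eq_case n G hG hN hr s t hst htn hne (by
      rw [hcomp, comp_C_mul_X_coeff, comp_C_mul_X_coeff]
      field_simp at heq
      rw [inv_pow, inv_pow]
      field_simp
      rw [hpow]
      linear_combination (a ^ s) * heq)
    have hLG : ∀ x : ℝ, L.eval x = G.leadingCoeff * (a * x + 1) ^ n := by
      intro x
      have h1 : G.eval (a * x + 1) = L.eval x := by
        rw [hGdef, eval_comp]
        congr 1
        simp
        field_simp
        ring
      rw [← h1]
      conv_lhs => rw [hfin]
      simp
    have hc : G.leadingCoeff = 1 := by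
      have := hLG 0
      rw [hL0] at this
      simpa using this.symm
    intro k _
    rw [hLG, hc, one_mul]
  · intro h
    have hLeq : L = ((X + C 1) ^ n : ℝ[X]).comp (C a * X) := by
      refine eq_of_infinite_eval_eq _ _ ?_
      refine Set.Infinite.mono (s := (fun k : ℕ => ((k + 1 : ℕ) : ℝ)) '' Set.univ) ?_
        (Set.infinite_univ.image ?_)
      · rintro _ ⟨k, -, rfl⟩
        simp only [Set.mem_ofPred_eq]
        rw [h (k + 1) (by omega), eval_comp]
        simp
      · intro a _ b _ hab
        have : a + 1 = b + 1 := Nat.cast_injective (R := ℝ) hab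
        omega
    have hco : ∀ i, L.coeff i = (n.choose i : ℝ) * a ^ i := by
      intro i
      rw [hLeq, comp_C_mul_X_coeff]
      congr 1
      rw [C_1, coeff_X_add_one_pow]
    rw [hco, hco, hpow]
    have := pow_ne_zero s ha'
    field_simp
end

section
/- Let a > 0 be a real number and let P ⊂ ℝ^n be an n-dimensional lattice polytope such that all n complex roots of its Ehrhart polynomial L_P have real part equal to -1/a. Then vol(P) ≤ (a/(a+1))^n · #(P ∩ ℤ^n), and equality holds if and only if L_P(k) = (ak+1)^n for all positive integers k. -/
open MeasureTheory Polynomial Pointwise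

open Classical in
theorem euler_one {τ : Type*} (T : Finset τ) (c : τ → ℤ) (J : τ → Set ℝ)
    (hc : ∀ i ∈ T, IsCompact (J i)) (hv : ∀ i ∈ T, Convex ℝ (J i))
    (h : ∀ t : ℝ, ∑ i ∈ T, (if t ∈ J i then c i else 0) = 0) :
    ∑ i ∈ T, (if (J i).Nonempty then c i else 0) = 0 := by
  rw [← Finset.sum_filter]
  set T' := T.filter (fun i => (J i).Nonempty) with hT'
  have hT : ∀ t : ℝ, ∑ i ∈ T', (if t ∈ J i then c i else 0) = 0 := by
    intro t
    refine Eq.trans ?_ (h t)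
    rw [hT', Finset.sum_filter]
    refine Finset.sum_congr rfl fun i _ => ?_
    by_cases ht : t ∈ J i
    · rw [if_pos ⟨t, ht⟩]
    · simp [ht]
  have hJ : ∀ i ∈ T', J i = Set.Icc (sInf (J i)) (sSup (J i)) := by
    intro i hi
    rw [hT', Finset.mem_filter] at hi
    exact eq_Icc_of_connected_compact ⟨hi.2, (hv i hi.1).isPreconnected⟩ (hc i hi.1)
  have key : ∀ b : ℝ, ∑ i ∈ T' with sSup (J i) = b, c i = 0 := by
    intro b
    have hev : ∀ᶠ b' in nhdsWithin b (Set.Ioi b), ∀ i ∈ T',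
        (b < sSup (J i) → b' < sSup (J i)) ∧ (b < sInf (J i) → b' < sInf (J i)) := by
      rw [Finset.eventually_all]
      intro i _
      refine Filter.Eventually.and ?_ ?_
      · by_cases hb : b < sSup (J i)
        · filter_upwards [nhdsWithin_le_nhds (Iio_mem_nhds hb)] with x hx _ using hx
        · exact Filter.Eventually.of_forall fun x hx => absurd hx hb
      · by_cases hb : b < sInf (J i)
        · filter_upwards [nhdsWithin_le_nhds (Iio_mem_nhds hb)] with x hx _ using hx
        · exact Filter.Eventually.of_forall fun x hx => absurd hx hb
    obtain ⟨b', hb', hbb'⟩ := (hev.and self_mem_nhdsWithin).exists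
    have hbb'' : b < b' := hbb'
    have e := congrArg₂ (· - ·) (hT b) (hT b')
    simp only [sub_zero, ← Finset.sum_sub_distrib] at e
    rw [Finset.sum_filter]
    refine Eq.trans ?_ e
    refine Finset.sum_congr rfl fun i hi => ?_
    have hne : sInf (J i) ≤ sSup (J i) := by
      rw [← Set.nonempty_Icc, ← hJ i hi]
      exact (Finset.mem_filter.1 hi).2
    have h1 := hb' i hi
    have m1 : ∀ t, t ∈ J i ↔ sInf (J i) ≤ t ∧ t ≤ sSup (J i) := fun t => by
      conv_lhs => rw [hJ i hi]
      rfl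
    simp only [m1]
    generalize sInf (J i) = x at *
    generalize sSup (J i) = y at *
    by_cases hy : y = b
    · subst hy
      rw [if_pos rfl, if_pos ⟨hne, le_rfl⟩, if_neg (by intro hh; linarith [hh.2])]
      simp
    · rw [if_neg hy]
      have : (x ≤ b ∧ b ≤ y) ↔ (x ≤ b' ∧ b' ≤ y) := by
        constructor
        · rintro ⟨p, q⟩
          exact ⟨by linarith, (h1.1 (lt_of_le_of_ne q (Ne.symm hy))).le⟩
        · rintro ⟨p, q⟩
          refine ⟨?_, by linarith⟩
          by_contra hx
          exact absurd (h1.2 (not_le.1 hx)) (not_lt.2 p)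
      simp [this]
  rw [← Finset.sum_fiberwise_of_maps_to (s := T') (t := T'.image fun i => sSup (J i))
    (g := fun i => sSup (J i)) (fun i hi => Finset.mem_image_of_mem _ hi)]
  exact Finset.sum_eq_zero fun b _ => key b

open Classical in
theorem euler_gen {ι τ : Type*} (T : Finset τ) (c : τ → ℤ) (K : τ → Set (ι → ℝ))
    (hc : ∀ i ∈ T, IsCompact (K i)) (hv : ∀ i ∈ T, Convex ℝ (K i))
    (h : ∀ x : ι → ℝ, ∑ i ∈ T, (if x ∈ K i then c i else 0) = 0) (s : Finset ι) :
    ∀ x₀ : ι → ℝ, ∑ i ∈ T, (if ∃ x ∈ K i, ∀ j, j ∉ s → x j = x₀ j then c i else 0) = 0 := by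
  induction s using Finset.induction_on with
  | empty =>
    intro x₀
    refine Eq.trans ?_ (h x₀)
    refine Finset.sum_congr rfl fun i _ => ?_
    congr 1
    apply propext
    constructor
    · rintro ⟨x, hx, hx'⟩
      rwa [show x₀ = x from funext fun j => (hx' j (by simp)).symm]
    · exact fun hx => ⟨x₀, hx, fun _ _ => rfl⟩
  | insert a s ha ih =>
    intro x₀
    set M : Set (ι → ℝ) := {x | ∀ j, j ∉ insert a s → x j = x₀ j} with hM
    have hMc : IsClosed M := by
      rw [hM]
      simp only [Set.ofPred_forall]
      exact isClosed_iInter fun j => isClosed_iInter fun _ =>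
        isClosed_eq (continuous_apply j) continuous_const
    have hMv : Convex ℝ M := by
      intro x hx y hy p q _ _ hpq j hj
      simp only [Pi.add_apply, Pi.smul_apply, smul_eq_mul, hx j hj, hy j hj, ← add_mul, hpq, one_mul]
    have := euler_one T c (fun i => (fun x : ι → ℝ => x a) '' (K i ∩ M))
      (fun i hi => ((hc i hi).inter_right hMc).image (continuous_apply a))
      (fun i hi => ((hv i hi).inter hMv).linear_image (LinearMap.proj (R := ℝ) (φ := fun _ : ι => ℝ) a)) ?_
    · refine Eq.trans ?_ this
      refine Finset.sum_congr rfl fun i _ => ?_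
      congr 1
      rw [Set.image_nonempty]
      rfl
    · intro t
      refine Eq.trans ?_ (ih (Function.update x₀ a t))
      refine Finset.sum_congr rfl fun i _ => ?_
      congr 1
      apply propext
      constructor
      · rintro ⟨x, ⟨hx, hx'⟩, rfl⟩
        refine ⟨x, hx, fun j hj => ?_⟩
        by_cases hja : j = a
        · subst hja; simp
        · rw [Function.update_of_ne hja]
          exact hx' j (by simp [hja, hj])
      · rintro ⟨x, hx, hx'⟩
        refine ⟨x, ⟨hx, fun j hj => ?_⟩, ?_⟩
        · rw [Finset.mem_insert, not_or] at hj
          rw [hx' j hj.2, Function.update_of_ne hj.1]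
        · simpa using hx' a ha

open Classical in
theorem euler_all {ι τ : Type*} [Fintype ι] (T : Finset τ) (c : τ → ℤ) (K : τ → Set (ι → ℝ))
    (hc : ∀ i ∈ T, IsCompact (K i)) (hv : ∀ i ∈ T, Convex ℝ (K i))
    (h : ∀ x : ι → ℝ, ∑ i ∈ T, (if x ∈ K i then c i else 0) = 0) :
    ∑ i ∈ T, (if (K i).Nonempty then c i else 0) = 0 := by
  refine Eq.trans ?_ (euler_gen T c K hc hv h Finset.univ 0)
  refine Finset.sum_congr rfl fun i _ => ?_
  congr 1
  simp [Set.Nonempty]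

theorem mem_smul_hull_s12 {ι E : Type*} [Fintype ι] [Nonempty ι] [AddCommGroup E] [Module ℝ E]
    (u : ι → E) (s : ℝ) (hs : 0 ≤ s) (y : E) :
    y ∈ s • convexHull ℝ (Set.range u) ↔
      ∃ μ : ι → ℝ, (∀ i, 0 ≤ μ i) ∧ ∑ i, μ i = s ∧ ∑ i, μ i • u i = y := by
  classical
  have hull : ∀ x, x ∈ convexHull ℝ (Set.range u) ↔
      ∃ μ : ι → ℝ, (∀ i, 0 ≤ μ i) ∧ ∑ i, μ i = 1 ∧ ∑ i, μ i • u i = x := by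
    intro x
    constructor
    · intro hx
      have hsub : convexHull ℝ (Set.range u) ⊆
          (Fintype.linearCombination ℝ u) '' (stdSimplex ℝ ι) := by
        refine convexHull_min ?_ ((convex_stdSimplex ℝ ι).linear_image _)
        rintro _ ⟨i, rfl⟩
        exact ⟨Pi.single i 1, single_mem_stdSimplex ℝ i, by simp⟩
      obtain ⟨μ, hμ, rfl⟩ := hsub hx
      exact ⟨μ, hμ.1, hμ.2, by simp [Fintype.linearCombination_apply]⟩
    · rintro ⟨μ, h0, h1, rfl⟩
      exact mem_convexHull_of_exists_fintype μ u h0 h1 (fun i => ⟨i, rfl⟩) rfl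
  rcases hs.eq_or_lt with rfl | hs'
  · rw [Set.zero_smul_set ((Set.range_nonempty u).convexHull), Set.mem_zero]
    constructor
    · rintro rfl
      exact ⟨0, by simp, by simp, by simp⟩
    · rintro ⟨μ, h0, h1, rfl⟩
      rw [Finset.sum_eq_zero_iff_of_nonneg (fun i _ => h0 i)] at h1
      exact Finset.sum_eq_zero fun i hi => by rw [h1 i hi, zero_smul]
  · rw [Set.mem_smul_set_iff_inv_smul_mem₀ hs'.ne', hull]
    constructor
    · rintro ⟨μ, h0, h1, h2⟩
      refine ⟨fun i => s * μ i, fun i => mul_nonneg hs (h0 i), by rw [← Finset.mul_sum, h1, mul_one], ?_⟩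
      simp only [mul_smul, ← Finset.smul_sum, h2, smul_inv_smul₀ hs'.ne']
    · rintro ⟨μ, h0, h1, h2⟩
      refine ⟨fun i => s⁻¹ * μ i, fun i => mul_nonneg (inv_nonneg.2 hs) (h0 i),
        by rw [← Finset.mul_sum, h1, inv_mul_cancel₀ hs'.ne'], ?_⟩
      simp only [mul_smul, ← Finset.smul_sum, h2]

open Classical in
theorem pointwise_zero {ι : Type*} [Fintype ι] [Nonempty ι] {n : ℕ}
    (u : ι → (Fin n → ℝ)) (y : Fin n → ℝ) :
    ∑ I : Finset ι, (if y - ∑ i ∈ I, u i ∈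
      ((Fintype.card ι - I.card : ℕ) : ℝ) • convexHull ℝ (Set.range u) then (-1 : ℤ) ^ I.card else 0)
      = 0 := by
  set N := Fintype.card ι with hN
  let K : Finset ι → Set (ι → ℝ) := fun I =>
    {x | (∀ i, 0 ≤ x i) ∧ ∑ i, x i = N ∧ ∑ i, x i • u i = y ∧ ∀ i ∈ I, 1 ≤ x i}
  have hcl : ∀ I, IsClosed (K I) := by
    intro I
    refine IsClosed.and ?_ (IsClosed.and ?_ (IsClosed.and ?_ ?_))
    · simp only [Set.ofPred_forall]
      exact isClosed_iInter fun i => isClosed_le continuous_const (continuous_apply i)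
    · exact isClosed_eq (by fun_prop) continuous_const
    · exact isClosed_eq (by fun_prop) continuous_const
    · simp only [Set.ofPred_forall]
      exact isClosed_iInter fun i => isClosed_iInter fun _ =>
        isClosed_le continuous_const (continuous_apply i)
  have hcomp : ∀ I, IsCompact (K I) := by
    intro I
    refine (isCompact_Icc (a := (0 : ι → ℝ)) (b := fun _ => (N : ℝ))).of_isClosed_subset (hcl I) ?_
    rintro x ⟨h0, h1, -⟩
    refine ⟨h0, fun i => ?_⟩
    rw [← h1]
    exact Finset.single_le_sum (fun j _ => h0 j) (Finset.mem_univ i)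
  have hconv : ∀ I, Convex ℝ (K I) := by
    rintro I x ⟨a0, a1, a2, a3⟩ z ⟨b0, b1, b2, b3⟩ p q hp hq hpq
    refine ⟨fun i => ?_, ?_, ?_, fun i hi => ?_⟩
    · exact add_nonneg (mul_nonneg hp (a0 i)) (mul_nonneg hq (b0 i))
    · simp only [Pi.add_apply, Pi.smul_apply, smul_eq_mul, Finset.sum_add_distrib, ← Finset.mul_sum,
        a1, b1, ← add_mul, hpq, one_mul]
    · simp only [Pi.add_apply, Pi.smul_apply, smul_assoc, add_smul, Finset.sum_add_distrib,
        ← Finset.smul_sum, a2, b2]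
      rw [← add_smul, hpq, one_smul]
    · have h1 := mul_le_mul_of_nonneg_left (a3 i hi) hp
      have h2 := mul_le_mul_of_nonneg_left (b3 i hi) hq
      simp only [Pi.add_apply, Pi.smul_apply, smul_eq_mul]
      linarith
  have hz : ∀ x : ι → ℝ, ∑ I : Finset ι, (if x ∈ K I then (-1 : ℤ) ^ I.card else 0) = 0 := by
    intro x
    by_cases hx : x ∈ K ∅
    · obtain ⟨h0, h1, h2, -⟩ := hx
      have hex : ∃ i, 1 ≤ x i := by
        by_contra! hcon
        have : ∑ i, x i < ∑ _i : ι, (1 : ℝ) :=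
          Finset.sum_lt_sum_of_nonempty Finset.univ_nonempty fun i _ => hcon i
        simp [h1, hN] at this
      have hprod : ∏ i : ι, (1 + (if 1 ≤ x i then (-1 : ℤ) else 0)) = 0 := by
        obtain ⟨i, hi⟩ := hex
        exact Finset.prod_eq_zero (Finset.mem_univ i) (by simp [hi])
      rw [Finset.prod_one_add, Finset.powerset_univ] at hprod
      refine Eq.trans ?_ hprod
      refine Finset.sum_congr rfl fun I _ => ?_
      rw [Finset.prod_ite_zero, Finset.prod_const]
      congr 1
      exact propext ⟨fun h => h.2.2.2, fun h => ⟨h0, h1, h2, h⟩⟩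
    · refine Finset.sum_eq_zero fun I _ => if_neg fun h => hx ⟨h.1, h.2.1, h.2.2.1, by simp⟩
  have := euler_all Finset.univ (fun I : Finset ι => (-1 : ℤ) ^ I.card) K (fun I _ => hcomp I)
    (fun I _ => hconv I) (fun x => by convert hz x)
  refine Eq.trans ?_ this
  refine Finset.sum_congr rfl fun I _ => ?_
  congr 1
  rw [mem_smul_hull_s12 u _ (Nat.cast_nonneg _), Nat.cast_sub (Finset.card_le_univ I)]
  have s1 : ∑ i, (if i ∈ I then (1 : ℝ) else 0) = I.card := by simp
  have s2 : ∑ i, (if i ∈ I then (1 : ℝ) else 0) • u i = ∑ i ∈ I, u i := by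
    simp [ite_smul, Finset.sum_ite_mem]
  apply propext
  constructor
  · rintro ⟨μ, h0, h1, h2⟩
    refine ⟨fun i => μ i + if i ∈ I then 1 else 0, fun i => ?_, ?_, ?_, fun i hi => ?_⟩
    · have := h0 i
      positivity
    · rw [Finset.sum_add_distrib, s1, h1]; ring
    · simp only [add_smul, Finset.sum_add_distrib]
      rw [s2, h2]; simp
    · simp [hi, h0 i]
  · rintro ⟨x, h0, h1, h2, h3⟩
    refine ⟨fun i => x i - if i ∈ I then 1 else 0, fun i => ?_, ?_, ?_⟩
    · by_cases hi : i ∈ I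
      · simpa [hi] using h3 i hi
      · simpa [hi] using h0 i
    · rw [Finset.sum_sub_distrib, s1, h1]
    · simp only [sub_smul, Finset.sum_sub_distrib]
      rw [s2, h2]

theorem finite_lattice {n : ℕ} (S : Set (Fin n → ℝ)) (hS : Bornology.IsBounded S) :
    {v : Fin n → ℤ | (fun i => (v i : ℝ)) ∈ S}.Finite := by
  obtain ⟨R, hR⟩ := hS.subset_closedBall 0
  refine (Set.finite_Icc (fun _ : Fin n => -⌈R⌉) (fun _ => ⌈R⌉)).subset ?_
  intro v hv
  have h1 := hR hv
  rw [mem_closedBall_zero_iff] at h1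
  have h2 : ∀ i, |(v i : ℝ)| ≤ R := fun i =>
    (norm_le_pi_norm (fun i => (v i : ℝ)) i).trans h1
  refine ⟨fun i => ?_, fun i => ?_⟩
  · have := (abs_le.1 (h2 i)).1
    have h3 : (-⌈R⌉ : ℝ) ≤ v i := by linarith [Int.le_ceil R]
    exact_mod_cast h3
  · have h3 : (v i : ℝ) ≤ ⌈R⌉ := by linarith [(abs_le.1 (h2 i)).2, Int.le_ceil R]
    exact_mod_cast h3

open Classical in
theorem const_one {n : ℕ} (P : Set (Fin n → ℝ)) (hP : IsLatticePolytope P) (hne : P.Nonempty)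
    (L : Polynomial ℝ) (hL : IsEhrhartPoly P L) : L.eval 0 = 1 := by
  obtain ⟨V, hV⟩ := hP
  have hVne : V.Nonempty := by
    rw [hV, convexHull_nonempty_iff, Set.image_nonempty] at hne
    exact_mod_cast hne
  have hPb : Bornology.IsBounded P := by
    rw [hV]
    exact (isBounded_convexHull.2 (V.finite_toSet.image _).isBounded)
  let ι := V × Fin (L.natDegree + 1)
  have : Nonempty V := ⟨⟨hVne.choose, hVne.choose_spec⟩⟩
  have : Nonempty ι := inferInstanceAs (Nonempty (V × Fin (L.natDegree + 1)))
  let w : ι → (Fin n → ℤ) := fun p => p.1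
  let u : ι → (Fin n → ℝ) := fun p i => (w p i : ℝ)
  have hrange : P = convexHull ℝ (Set.range u) := by
    rw [hV]
    congr 1
    ext x
    constructor
    · rintro ⟨v, hv, rfl⟩
      exact ⟨(⟨v, hv⟩, 0), rfl⟩
    · rintro ⟨⟨v, j⟩, rfl⟩
      exact ⟨v, v.2, rfl⟩
  set N := Fintype.card ι with hN
  have hNlt : L.natDegree < N := by
    rw [hN, Fintype.card_prod, Fintype.card_fin]
    have : 0 < Fintype.card V := Fintype.card_pos
    nlinarith
  let f : ℕ → ℤ := fun k => latticePointCount ((k : ℝ) • P)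
  have hf0 : f 0 = 1 := by
    simp only [f, latticePointCount, Nat.cast_zero]
    rw [Set.zero_smul_set hne]
    have : {v : Fin n → ℤ | (fun i => (v i : ℝ)) ∈ (0 : Set (Fin n → ℝ))} = {0} := by
      ext v
      simp [funext_iff]
    rw [this]
    simp
  have hfL : ∀ k, 0 < k → (f k : ℝ) = L.eval (k : ℝ) := by
    intro k hk
    rw [hL k hk]
    simp [f]
  -- the alternating sum for f
  let A : Finset ι → Set (Fin n → ℤ) := fun I =>
    {m | (fun i => (m i : ℝ)) - ∑ i ∈ I, u i ∈ ((N - I.card : ℕ) : ℝ) • P}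
  have hA : ∀ I, A I = (fun m => m + ∑ i ∈ I, w i) ''
      {v : Fin n → ℤ | (fun i => (v i : ℝ)) ∈ ((N - I.card : ℕ) : ℝ) • P} := by
    intro I
    ext m
    have hm : ∀ m' : Fin n → ℤ, (fun j => ((m' - ∑ i ∈ I, w i) j : ℝ)) =
        (fun i => (m' i : ℝ)) - ∑ i ∈ I, u i := by
      intro m'
      ext j
      simp [u]
    constructor
    · intro h
      refine ⟨m - ∑ i ∈ I, w i, ?_, by simp⟩
      have h' : (fun i => (m i : ℝ)) - ∑ i ∈ I, u i ∈ ((N - I.card : ℕ) : ℝ) • P := h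
      rw [← hm] at h'
      exact h'
    · rintro ⟨v, hv, rfl⟩
      have h' := hm (v + ∑ i ∈ I, w i)
      rw [add_sub_cancel_right] at h'
      change ((fun i => ((v + ∑ i ∈ I, w i) i : ℝ)) - ∑ i ∈ I, u i) ∈ ((N - I.card : ℕ) : ℝ) • P
      exact h' ▸ hv
  have hAfin : ∀ I, (A I).Finite := fun I => by
    rw [hA]
    exact (finite_lattice _ (hPb.smul₀ _)).image _
  have hAcard : ∀ I, ((A I).ncard : ℤ) = f (N - I.card) := fun I => by
    rw [hA, Set.ncard_image_of_injective _ (add_left_injective _)]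
    rfl
  let U : Finset (Fin n → ℤ) := Finset.univ.biUnion fun I => (hAfin I).toFinset
  have hAsum : ∀ I, ((A I).ncard : ℤ) = ∑ m ∈ U, (if m ∈ A I then 1 else 0) := fun I => by
    rw [Finset.sum_boole, Set.ncard_eq_toFinset_card _ (hAfin I)]
    congr 2
    ext m
    simp only [Set.Finite.mem_toFinset, Finset.mem_filter, U, Finset.mem_biUnion, Finset.mem_univ,
      true_and]
    exact ⟨fun h => ⟨⟨I, h⟩, h⟩, fun h => h.2⟩
  have hsum : ∑ I : Finset ι, (-1 : ℤ) ^ I.card * f (N - I.card) = 0 := by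
    simp only [← hAcard, hAsum, Finset.mul_sum]
    rw [Finset.sum_comm]
    refine Finset.sum_eq_zero fun m _ => ?_
    refine Eq.trans ?_ (pointwise_zero u (fun i => (m i : ℝ)))
    refine Finset.sum_congr rfl fun I _ => ?_
    rw [mul_ite, mul_one, mul_zero, ← hrange]
    rfl
  have hsum2 : ∀ g : ℕ → ℝ, ∑ I : Finset ι, (-1 : ℝ) ^ I.card * g (N - I.card) =
      ∑ k ∈ Finset.range (N + 1), ((-1 : ℤ) ^ (N - k) * N.choose k) • g k := by
    intro g
    rw [← Finset.powerset_univ, Finset.sum_powerset_apply_card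
      (fun k => (-1 : ℝ) ^ k * g (N - k)), Finset.card_univ, ← hN,
      ← Finset.sum_range_reflect]
    refine Finset.sum_congr rfl fun k hk => ?_
    have hk' : k ≤ N := Nat.lt_succ_iff.1 (Finset.mem_range.1 hk)
    rw [show N + 1 - 1 - k = N - k by omega, Nat.choose_symm hk', show N - (N - k) = k by omega]
    simp
    ring
  have e1 : ∑ k ∈ Finset.range (N + 1), ((-1 : ℤ) ^ (N - k) * N.choose k) • (f k : ℝ) = 0 := by
    rw [← hsum2 (fun k => (f k : ℝ))]
    exact_mod_cast hsum
  have e2 : ∑ k ∈ Finset.range (N + 1), ((-1 : ℤ) ^ (N - k) * N.choose k) • (L.eval (k : ℝ)) = 0 := by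
    have := congrFun (Polynomial.fwdDiff_iter_eq_zero_of_degree_lt hNlt) 0
    rw [fwdDiff_iter_eq_sum_shift] at this
    simpa using this
  rw [Finset.sum_range_succ'] at e1 e2
  have e3 : ∑ k ∈ Finset.range N, ((-1 : ℤ) ^ (N - (k + 1)) * N.choose (k + 1)) • (f (k + 1) : ℝ) =
    ∑ k ∈ Finset.range N, ((-1 : ℤ) ^ (N - (k + 1)) * N.choose (k + 1)) • (L.eval ((k + 1 : ℕ) : ℝ)) :=
    Finset.sum_congr rfl fun k _ => by rw [hfL _ (Nat.succ_pos k)]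
  rw [e3, ← e2, add_right_inj, hf0] at e1
  have hu : ((-1 : ℤ) ^ (N - 0) * N.choose 0) ≠ 0 := by simp
  have := smul_right_injective ℝ hu e1
  simpa using this.symm

theorem volume_eq_lead {n : ℕ} (P : Set (Fin n → ℝ)) (hP : IsLatticePolytope P)
    (L : Polynomial ℝ) (hL : IsEhrhartPoly P L) (hdeg : L.natDegree = n) (hL0 : L ≠ 0) :
    (volume P).toReal = L.leadingCoeff := by
  obtain ⟨V, hV⟩ := hP
  have hPc : IsCompact P := by
    rw [hV]
    exact (V.finite_toSet.image _).isCompact_convexHull ℝ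
  have hconv : Convex ℝ P := by rw [hV]; exact convex_convexHull _ _
  have t1 := tendsto_card_div_pow_atTop_volume P hPc.isBounded hPc.measurableSet
    (hconv.addHaar_frontier volume)
  have t2 := (Polynomial.div_tendsto_atTop_leadingCoeff_div_of_degree_eq L (X ^ n : Polynomial ℝ) (by
    rw [degree_X_pow, degree_eq_natDegree hL0, hdeg])).comp tendsto_natCast_atTop_atTop
  rw [leadingCoeff_X_pow, div_one] at t2
  refine tendsto_nhds_unique t1 (t2.congr' ?_)
  filter_upwards [Filter.eventually_gt_atTop 0] with k hk
  have hk0 : (k : ℝ) ≠ 0 := by positivity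
  simp only [Function.comp, eval_pow, eval_X, Fintype.card_fin]
  rw [hL k hk]
  congr 2
  rw [latticePointCount, Nat.card_coe_set_eq]
  have hinj : Function.Injective (fun v : Fin n → ℤ => (k : ℝ)⁻¹ • (fun i => (v i : ℝ))) := by
    intro v v' h
    have := smul_right_injective (Fin n → ℝ) (inv_ne_zero hk0) h
    ext i
    exact_mod_cast congrFun this i
  rw [← Set.ncard_image_of_injective _ hinj]
  congr 1
  ext x
  constructor
  · rintro ⟨v, hv, rfl⟩
    refine ⟨(Set.mem_smul_set_iff_inv_smul_mem₀ hk0 _ _).1 hv, Set.smul_mem_smul_set ?_⟩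
    rw [SetLike.mem_coe, Module.Basis.mem_span_iff_repr_mem]
    intro i
    exact ⟨v i, by simp⟩
  · rintro ⟨hx, y, hy, rfl⟩
    rw [SetLike.mem_coe, Module.Basis.mem_span_iff_repr_mem] at hy
    choose v hv using hy
    have hy' : (fun i => (v i : ℝ)) = y := by
      ext i
      simpa using hv i
    refine ⟨v, ?_, by simp only [hy']⟩
    exact (Set.mem_smul_set_iff_inv_smul_mem₀ hk0 _ _).2 (hy' ▸ hx)

theorem multiset_prod_ge (r : ℝ) (hr : 0 < r) (s : Multiset ℝ) (hs : ∀ x ∈ s, r ≤ x) :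
    r ^ s.card ≤ s.prod ∧ (s.prod = r ^ s.card → ∀ x ∈ s, x = r) := by
  induction s using Multiset.induction_on with
  | empty => simp
  | cons a s ih =>
    obtain ⟨h1, h2⟩ := ih fun x hx => hs x (Multiset.mem_cons_of_mem hx)
    have ha : r ≤ a := hs a (Multiset.mem_cons_self a s)
    have hp : 0 < r ^ s.card := by positivity
    rw [Multiset.card_cons, Multiset.prod_cons, pow_succ']
    refine ⟨mul_le_mul ha h1 hp.le (hr.le.trans ha), fun h => ?_⟩
    have e1 : a = r := by nlinarith
    subst e1
    have e2 := mul_left_cancel₀ hr.ne' h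
    intro x hx
    rcases Multiset.mem_cons.1 hx with rfl | hx
    · rfl
    · exact h2 e2 x hx

theorem volume_le_of_roots_real_part (n : ℕ) (a : ℝ) (ha : 0 < a) (P : Set (Fin n → ℝ))
    (hP : IsLatticePolytope P) (hfull : (interior P).Nonempty)
    (L : Polynomial ℝ) (hL : IsEhrhartPoly P L) (hdeg : L.natDegree = n)
    (hroots : ∀ z ∈ (L.map (algebraMap ℝ ℂ)).roots, z.re = -1 / a) :
    (volume P).toReal ≤ (a / (a + 1)) ^ n * (latticePointCount P : ℝ) ∧
    ((volume P).toReal = (a / (a + 1)) ^ n * (latticePointCount P : ℝ) ↔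
      ∀ k : ℕ, 0 < k → L.eval (k : ℝ) = (a * k + 1) ^ n) := by
  have h01 : L.eval 0 = 1 := const_one P hP (hfull.mono interior_subset) L hL
  have hL0 : L ≠ 0 := by
    rintro rfl
    simp at h01
  have hvol := volume_eq_lead P hP L hL hdeg hL0
  have hc0 : 0 < L.leadingCoeff :=
    lt_of_le_of_ne (hvol ▸ ENNReal.toReal_nonneg) (leadingCoeff_ne_zero.2 hL0).symm
  have hcount : (latticePointCount P : ℝ) = L.eval 1 := by
    have := hL 1 one_pos
    simpa using this.symm
  rw [hvol, hcount]
  set c := L.leadingCoeff with hc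
  set Q := L.map (algebraMap ℝ ℂ) with hQ
  have hsplit : Q.Splits := IsAlgClosed.splits Q
  have hQc : Q.leadingCoeff = (c : ℂ) := by
    rw [hQ, leadingCoeff_map]
    rfl
  have hcard : Q.roots.card = n := by
    rw [← hsplit.natDegree_eq_card_roots, hQ, natDegree_map, hdeg]
  have hQeval : ∀ x : ℝ, ((L.eval x : ℝ) : ℂ) = c * (Q.roots.map fun z => (x : ℂ) - z).prod := by
    intro x
    rw [← hQc, ← hsplit.eval_eq_prod_roots, hQ]
    exact (eval_map_apply (algebraMap ℝ ℂ) x).symm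
  set r : ℝ := 1 + 1 / a with hr
  have hr0 : 0 < r := by positivity
  have har : a / (a + 1) = r⁻¹ := by rw [hr]; field_simp
  set s : Multiset ℝ := Q.roots.map fun z => ‖(1 : ℂ) - z‖ with hs
  have hscard : s.card = n := by rw [hs, Multiset.card_map, hcard]
  have hre : ∀ z ∈ Q.roots, ((1 : ℂ) - z).re = r := by
    intro z hz
    rw [Complex.sub_re, hroots z hz, Complex.one_re, hr]
    ring
  have hsge : ∀ x ∈ s, r ≤ x := by
    intro x hx
    obtain ⟨z, hz, rfl⟩ := Multiset.mem_map.1 hx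
    rw [← hre z hz]
    exact Complex.re_le_norm _
  obtain ⟨hge, heq⟩ := multiset_prod_ge r hr0 s hsge
  rw [hscard] at hge heq
  have hL1nn : 0 ≤ L.eval 1 := by rw [← hcount]; positivity
  have hL1 : L.eval 1 = c * s.prod := by
    have h1 := congrArg norm (hQeval 1)
    rw [Complex.norm_real, Real.norm_of_nonneg hL1nn, norm_mul, Complex.norm_real,
      Real.norm_of_nonneg hc0.le] at h1
    rw [h1, hs]
    congr 1
    have := (map_multiset_prod (normHom (α := ℂ)) (Q.roots.map fun z => (1 : ℂ) - z))
    rw [Multiset.map_map] at this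
    simpa using this
  rw [har, hL1, inv_pow]
  have hrn : 0 < r ^ n := by positivity
  refine ⟨?_, ?_, ?_⟩
  · rw [inv_mul_eq_div, le_div_iff₀ hrn]
    exact mul_le_mul_of_nonneg_left hge hc0.le
  · intro h k hk
    rw [eq_comm, inv_mul_eq_div, div_eq_iff hrn.ne'] at h
    have hp := mul_left_cancel₀ hc0.ne' h
    have hall := heq hp
    have hzs : ∀ z ∈ Q.roots, z = ((-1 / a : ℝ) : ℂ) := by
      intro z hz
      have h1 : ‖(1 : ℂ) - z‖ = ((1 : ℂ) - z).re := by
        rw [hre z hz]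
        exact hall _ (Multiset.mem_map_of_mem _ hz)
      have h2 := (Complex.re_eq_norm.1 h1.symm)
      have h3 := (Complex.nonneg_iff.1 h2).2
      apply Complex.ext
      · rw [hroots z hz, Complex.ofReal_re]
      · rw [Complex.ofReal_im]
        simpa using h3
    have hrep : Q.roots = Multiset.replicate n ((-1 / a : ℝ) : ℂ) := by
      rw [← hcard]
      exact Multiset.eq_replicate_card.2 hzs
    have hev : ∀ x : ℝ, L.eval x = c * (x - -1 / a) ^ n := by
      intro x
      have := hQeval x
      rw [hrep, Multiset.map_replicate, Multiset.prod_replicate] at this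
      exact_mod_cast this
    have h0 := hev 0
    rw [h01] at h0
    rw [hev k]
    have hca : c = a ^ n := by
      have : c * (1 / a) ^ n = 1 := by rw [show (1 / a : ℝ) = 0 - -1 / a by ring]; exact h0.symm
      rw [one_div, inv_pow] at this
      field_simp at this
      exact this
    rw [hca, ← mul_pow]
    congr 1
    field_simp
    ring
  · intro h
    have hpoly : L = (C a * X + C 1) ^ n := by
      refine Polynomial.eq_of_infinite_eval_eq _ _ ?_
      refine (Set.infinite_range_of_injective
        (f := fun k : ℕ => ((k + 1 : ℕ) : ℝ)) ?_).mono ?_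
      · intro x y hxy
        simpa using hxy
      · rintro _ ⟨k, rfl⟩
        have := h (k + 1) k.succ_pos
        simp only [Set.mem_ofPred_eq]
        rw [this]
        simp
    have hca : c = a ^ n := by
      rw [hc, hpoly, leadingCoeff_pow, leadingCoeff_linear ha.ne']
    have h1 := h 1 one_pos
    rw [← hL1, inv_mul_eq_div, eq_div_iff hrn.ne', hca]
    simp only [Nat.cast_one, mul_one] at h1
    rw [h1, ← mul_pow, hr]
    congr 1
    field_simp
end

section
/- Let a > 0 be a real number, n ≥ 2, and let P ⊂ ℝ^n be an n-dimensional lattice polytope such that all n complex roots of its Ehrhart polynomial L_P have real part equal to -1/a. Then #(P ∩ ℤ^n) ≤ ((a+1)^{n-2}(a+2)/a^{n-1}) · vol(P) + (a+1)^{n-2}. -/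
open MeasureTheory Polynomial Pointwise

theorem one_dim_euler {J : Type*} [Fintype J] (α a b : J → ℝ)
    (h : ∀ t : ℝ, ∑ j, (if a j ≤ t ∧ t ≤ b j then α j else 0) = 0) (hab : ∀ j, a j ≤ b j) :
    ∑ j, α j = 0 := by
  classical
  have key : ∀ t : ℝ, ∑ j, (if b j = t then α j else 0) = 0 := by
    intro t
    have h1 : ∀ j, ∀ᶠ s in nhdsWithin t (Set.Ioi t),
        ((if a j ≤ s ∧ s ≤ b j then α j else 0) : ℝ) =
          (if a j ≤ t ∧ t ≤ b j then α j else 0) - (if b j = t then α j else 0) := by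
      intro j
      have hj := hab j
      by_cases h2 : t < a j
      · filter_upwards [nhdsWithin_le_nhds (Iio_mem_nhds h2)] with s hs
        have hs' : s < a j := hs
        rw [if_neg (by intro h; linarith [h.1]), if_neg (by intro h; linarith [h.1]),
          if_neg (by intro h; linarith)]
        simp
      · by_cases h3 : t < b j
        · filter_upwards [nhdsWithin_le_nhds (Iio_mem_nhds h3), self_mem_nhdsWithin] with s hs hs2
          have hs' : s < b j := hs
          have hs2' : t < s := hs2
          rw [if_pos (by constructor <;> linarith), if_pos (by constructor <;> linarith),
            if_neg (by intro h; linarith)]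
          simp
        · filter_upwards [self_mem_nhdsWithin] with s hs2
          have hs2' : t < s := hs2
          rw [if_neg (by intro h; linarith [h.2])]
          by_cases h4 : b j = t
          · rw [if_pos (by constructor <;> linarith), if_pos h4]; simp
          · have : b j < t := lt_of_le_of_ne (not_lt.1 h3) h4
            rw [if_neg (by intro h; linarith [h.2]), if_neg h4]; simp
    obtain ⟨s, hs⟩ := (Filter.eventually_all.2 h1).exists
    have h5 := h s
    rw [Finset.sum_congr rfl (fun j _ => hs j), Finset.sum_sub_distrib, h t] at h5
    linarith
  have h6 : ∑ j, α j = ∑ t ∈ Finset.univ.image b, ∑ j, (if b j = t then α j else 0) := by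
    rw [Finset.sum_comm]
    refine Finset.sum_congr rfl fun j _ => ?_
    rw [Finset.sum_ite_eq, if_pos (Finset.mem_image_of_mem _ (Finset.mem_univ _))]
  rw [h6]
  exact Finset.sum_eq_zero fun t _ => key t

open Classical in
theorem euler_aux {ι J : Type*} [Fintype ι] [Fintype J] (α : J → ℝ) (s : Finset ι) :
    ∀ (c : ι → ℝ) (K : J → Set (ι → ℝ)), (∀ j, IsCompact (K j)) → (∀ j, Convex ℝ (K j)) →
      (∀ j, ∀ x ∈ K j, ∀ i ∉ s, x i = c i) →
      (∀ x, ∑ j, (if x ∈ K j then α j else 0) = 0) →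
      ∑ j, (if (K j).Nonempty then α j else 0) = 0 := by
  induction s using Finset.induction_on with
  | empty =>
    intro c K hK hC hc h
    refine Eq.trans ?_ (h c)
    refine Finset.sum_congr rfl fun j _ => ?_
    congr 1
    refine propext ⟨?_, fun h => ⟨c, h⟩⟩
    rintro ⟨x, hx⟩
    have : x = c := funext fun i => hc j x hx i (by simp)
    exact this ▸ hx
  | insert i s his ih =>
    intro c K hK hC hc h
    have hslice : ∀ t : ℝ, ∑ j, (if (K j ∩ {x | x i = t}).Nonempty then α j else 0) = 0 := by
      intro t
      refine ih (Function.update c i t) (fun j => K j ∩ {x | x i = t}) ?_ ?_ ?_ ?_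
      · intro j
        exact (hK j).inter_right (isClosed_eq (continuous_apply i) continuous_const)
      · intro j
        refine (hC j).inter ?_
        exact convex_hyperplane (f := fun x : ι → ℝ => x i)
          ⟨fun _ _ => rfl, fun _ _ => rfl⟩ t
      · rintro j x ⟨hx, hxt⟩ k hk
        by_cases hki : k = i
        · subst hki; simpa using hxt
        · rw [Function.update_of_ne hki]
          exact hc j x hx k (by simp [hki, hk])
      · intro x
        by_cases hx : x i = t
        · simpa [hx] using h x
        · simp [hx]
    have hint : ∀ j, ∃ a b : ℝ, a ≤ b ∧ ((K j).Nonempty → ∀ t, (K j ∩ {x | x i = t}).Nonempty ↔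
        a ≤ t ∧ t ≤ b) := by
      intro j
      by_cases hne : (K j).Nonempty
      · have hcpt : IsCompact ((fun x : ι → ℝ => x i) '' K j) := (hK j).image (continuous_apply i)
        have hconn : IsPreconnected ((fun x : ι → ℝ => x i) '' K j) :=
          (hC j).isPreconnected.image _ (continuous_apply i).continuousOn
        have heq := eq_Icc_of_connected_compact ⟨hne.image _, hconn⟩ hcpt
        have hne' := hne.image (fun x : ι → ℝ => x i)
        refine ⟨sInf ((fun x : ι → ℝ => x i) '' K j), sSup ((fun x : ι → ℝ => x i) '' K j), ?_, ?_⟩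
        · exact csInf_le_csSup hne' hcpt.bddBelow hcpt.bddAbove
        · intro _ t
          rw [← Set.mem_Icc, ← heq]
          simp [Set.Nonempty]
      · exact ⟨0, 0, le_rfl, fun h => absurd h hne⟩
    choose a b hab hKab using hint
    refine one_dim_euler _ a b ?_ hab
    intro t
    refine Eq.trans ?_ (hslice t)
    refine Finset.sum_congr rfl fun j _ => ?_
    by_cases hne : (K j).Nonempty
    · rw [if_pos hne]
      simp only [hKab j hne t]
    · have hne2 : ¬ (K j ∩ {x | x i = t}).Nonempty := fun h => hne (h.mono Set.inter_subset_left)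
      simp [hne, hne2]

theorem poly_aux (c : ℝ) (hc : 0 < c) : ∀ (n : ℕ) (p : ℝ[X]), p.Monic → p.natDegree = n →
    (∀ z : ℂ, aeval z p = 0 → z.re = -c) →
    1 ≤ p.eval 0 / c ^ n ∧
    p.eval 1 / (1 + c) ^ n ≤ (1 + 2 * c) / (1 + c) ^ 2 + c ^ 2 / (1 + c) ^ 2 * (p.eval 0 / c ^ n) := by
  intro n
  induction n using Nat.strong_induction_on with
  | _ n ih =>
  intro p hp hn hr
  have hlm : (1 + 2 * c) / (1 + c) ^ 2 + c ^ 2 / (1 + c) ^ 2 = 1 := by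
    field_simp; ring
  rcases Nat.eq_zero_or_pos n with h0 | hpos
  · subst h0
    have : p = 1 := (Polynomial.Monic.natDegree_eq_zero hp).1 hn
    subst this
    simp [hlm]
  obtain ⟨z, hz⟩ := IsAlgClosed.exists_aeval_eq_zero ℂ p
    (by rw [Polynomial.degree_eq_natDegree hp.ne_zero, hn]; exact_mod_cast hpos.ne')
  have hzre := hr z hz
  by_cases him : z.im = 0
  · have hzr : z = ((-c : ℝ) : ℂ) := by apply Complex.ext <;> simp [hzre, him]
    have hroot : p.eval (-c) = 0 := by
      rw [hzr] at hz
      have := Polynomial.aeval_algebraMap_apply ℂ (-c) p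
      rw [Complex.coe_algebraMap, hz] at this
      simpa [Polynomial.aeval_def] using this.symm
    obtain ⟨q, hq⟩ := Polynomial.dvd_iff_isRoot.2 hroot
    have hmon : (X - C (-c)).Monic := monic_X_sub_C _
    have hqm : q.Monic := hmon.of_mul_monic_left (hq ▸ hp)
    have hqd : q.natDegree + 1 = n := by
      rw [← hn, hq, hmon.natDegree_mul hqm, natDegree_X_sub_C, add_comm]
    obtain ⟨h1, h2⟩ := ih q.natDegree (by omega) q hqm rfl (fun w hw => hr w (by rw [hq]; simp [hw]))
    have e0 : p.eval 0 / c ^ n = q.eval 0 / c ^ q.natDegree := by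
      rw [hq, ← hqd]; simp [pow_succ]; field_simp
    have e1 : p.eval 1 / (1 + c) ^ n = q.eval 1 / (1 + c) ^ q.natDegree := by
      rw [hq, ← hqd]; simp [pow_succ]; field_simp
    rw [e0, e1]
    exact ⟨h1, h2⟩
  · obtain ⟨q, hq⟩ := Polynomial.quadratic_dvd_of_aeval_eq_zero_im_ne_zero p hz him
    set Q : ℝ[X] := X ^ 2 - C (2 * z.re) * X + C (‖z‖ ^ 2) with hQ
    have hQd : Q.natDegree = 2 := by rw [hQ]; compute_degree!
    have hmon : Q.Monic := by rw [hQ]; monicity!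
    have hqm : q.Monic := hmon.of_mul_monic_left (hq ▸ hp)
    have hqd : q.natDegree + 2 = n := by
      rw [← hn, hq, hmon.natDegree_mul hqm, hQd, add_comm]
    obtain ⟨h1, h2⟩ := ih q.natDegree (by omega) q hqm rfl (fun w hw => hr w (by rw [hq]; simp [hw]))
    have hzc : 1 ≤ ‖z‖ ^ 2 / c ^ 2 := by
      rw [one_le_div (by positivity), ← Complex.normSq_eq_norm_sq, Complex.normSq_apply, hzre]
      nlinarith [mul_self_nonneg z.im]
    have e0 : p.eval 0 / c ^ n = ‖z‖ ^ 2 / c ^ 2 * (q.eval 0 / c ^ q.natDegree) := by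
      rw [hq, ← hqd, hQ]; simp [pow_add]; field_simp
    have e1 : p.eval 1 / (1 + c) ^ n = ((1 + 2 * c) / (1 + c) ^ 2 +
        c ^ 2 / (1 + c) ^ 2 * (‖z‖ ^ 2 / c ^ 2)) * (q.eval 1 / (1 + c) ^ q.natDegree) := by
      rw [hq, ← hqd, hQ, hzre]; simp [pow_add]; field_simp
    rw [e0, e1]
    generalize ‖z‖ ^ 2 / c ^ 2 = w at *
    generalize q.eval 0 / c ^ q.natDegree = u at *
    have hl : 0 < (1 + 2 * c) / (1 + c) ^ 2 := by positivity
    have hm : 0 < c ^ 2 / (1 + c) ^ 2 := by positivity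
    generalize (1 + 2 * c) / (1 + c) ^ 2 = l at *
    generalize c ^ 2 / (1 + c) ^ 2 = m at *
    refine ⟨by nlinarith, ?_⟩
    have h3 : (l + m * w) * (q.eval 1 / (1 + c) ^ q.natDegree) ≤ (l + m * w) * (l + m * u) := by
      apply mul_le_mul_of_nonneg_left h2; positivity
    refine h3.trans ?_
    have h4 : 0 ≤ l * m * ((w - 1) * (u - 1)) :=
      mul_nonneg (by positivity) (mul_nonneg (by linarith) (by linarith))
    have : l = 1 - m := by linarith
    subst this
    nlinarith

/-- Integer points of the `k`-th dilate of the convex hull of the family `v`. -/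
def dilPts {n : ℕ} {ι : Type*} [Fintype ι] (v : ι → Fin n → ℤ) (k : ℕ) : Set (Fin n → ℤ) :=
  {x | ∃ l : ι → ℝ, (∀ i, 0 ≤ l i) ∧ ∑ i, l i = k ∧ ∀ t, ∑ i, l i * (v i t : ℝ) = x t}

theorem dilPts_finite {n : ℕ} {ι : Type*} [Fintype ι] (v : ι → Fin n → ℤ) (k : ℕ) :
    (dilPts v k).Finite := by
  refine (Set.finite_Icc (fun t => -((k : ℤ) * ∑ i, |v i t|))
    (fun t => (k : ℤ) * ∑ i, |v i t|)).subset ?_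
  rintro x ⟨l, h0, h1, h2⟩
  have key : ∀ t, |x t| ≤ (k : ℤ) * ∑ i, |v i t| := by
    intro t
    have : (|x t| : ℝ) ≤ (k : ℝ) * ∑ i, |(v i t : ℝ)| := by
      rw [← h2 t]
      refine (Finset.abs_sum_le_sum_abs _ _).trans ?_
      rw [Finset.mul_sum]
      refine Finset.sum_le_sum fun i _ => ?_
      rw [abs_mul, abs_of_nonneg (h0 i), ← h1]
      exact mul_le_mul_of_nonneg_right
        (Finset.single_le_sum (f := l) (fun j _ => h0 j) (Finset.mem_univ i)) (abs_nonneg _)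
    exact_mod_cast this
  exact ⟨fun t => (abs_le.1 (key t)).1, fun t => (abs_le.1 (key t)).2⟩

theorem dilPts_zero {n : ℕ} {ι : Type*} [Fintype ι] (v : ι → Fin n → ℤ) :
    dilPts v 0 = {0} := by
  ext x
  simp only [dilPts, Set.mem_ofPred_eq, Set.mem_singleton_iff]
  constructor
  · rintro ⟨l, h0, h1, h2⟩
    have hl : ∀ i, l i = 0 := by
      intro i
      exact (Finset.sum_eq_zero_iff_of_nonneg (fun i _ => h0 i)).1 (by simpa using h1) i
        (Finset.mem_univ i)
    funext t
    have := h2 t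
    simp only [hl, zero_mul, Finset.sum_const_zero] at this
    exact_mod_cast this.symm
  · rintro rfl
    exact ⟨0, by simp, by simp, by simp⟩

theorem mem_dilPts_iff {n : ℕ} {ι : Type*} [Fintype ι] (v : ι → Fin n → ℤ) (k : ℕ) (hk : 0 < k)
    (x : Fin n → ℤ) :
    x ∈ dilPts v k ↔ (fun t => (x t : ℝ)) ∈
      (k : ℝ) • convexHull ℝ (Set.range fun i => fun t => (v i t : ℝ)) := by
  classical
  have hk' : (0 : ℝ) < k := by exact_mod_cast hk
  have hull : convexHull ℝ (Set.range fun i => fun t => (v i t : ℝ)) =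
      (Fintype.linearCombination ℝ (fun i => fun t => (v i t : ℝ))) '' stdSimplex ℝ ι := by
    rw [← convexHull_rangle_single_eq_stdSimplex, LinearMap.image_convexHull, ← Set.range_comp]
    congr 2
    funext i
    simp [Fintype.linearCombination_apply_single]
  rw [hull, Set.mem_smul_set]
  constructor
  · rintro ⟨l, h0, h1, h2⟩
    refine ⟨_, ⟨fun i => (k : ℝ)⁻¹ * l i, ⟨fun i => ?_, ?_⟩, rfl⟩, ?_⟩
    · have := h0 i; positivity
    · rw [← Finset.mul_sum, h1]; field_simp
    · funext t
      rw [← h2 t]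
      simp only [Fintype.linearCombination_apply, Pi.smul_apply, Finset.sum_apply, smul_eq_mul,
        Finset.mul_sum]
      refine Finset.sum_congr rfl fun i _ => ?_
      field_simp
  · rintro ⟨_, ⟨w, ⟨h0, h1⟩, rfl⟩, h2⟩
    refine ⟨fun i => k * w i, fun i => mul_nonneg hk'.le (h0 i), ?_, fun t => ?_⟩
    · rw [← Finset.mul_sum, h1, mul_one]
    · have := congrFun h2 t
      simp only [Fintype.linearCombination_apply, Pi.smul_apply, Finset.sum_apply, smul_eq_mul,
        Finset.mul_sum] at this
      rw [← this]
      exact Finset.sum_congr rfl fun i _ => by ring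

open Classical in
theorem pointwise_identity {n : ℕ} {ι : Type*} [Fintype ι] [Nonempty ι] (v : ι → Fin n → ℤ)
    (x : Fin n → ℤ) :
    ∑ I : Finset ι, (if x - ∑ i ∈ I, v i ∈ dilPts v (Fintype.card ι - I.card)
      then (-1 : ℝ) ^ I.card else 0) = 0 := by
  let K : Finset ι → Set (ι → ℝ) := fun I => {l | (∀ i, 0 ≤ l i) ∧ ∑ i, l i = Fintype.card ι ∧
    (∀ t, ∑ i, l i * (v i t : ℝ) = x t) ∧ ∀ i ∈ I, 1 ≤ l i}
  have hKc : ∀ I, IsCompact (K I) := by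
    intro I
    refine (isCompact_Icc (a := (0 : ι → ℝ)) (b := fun _ => (Fintype.card ι : ℝ))).of_isClosed_subset
      ?_ ?_
    · have e : K I = (⋂ i, {l : ι → ℝ | 0 ≤ l i}) ∩ ({l : ι → ℝ | ∑ i, l i = (Fintype.card ι : ℝ)} ∩
          ((⋂ t, {l | ∑ i, l i * (v i t : ℝ) = x t}) ∩ ⋂ i ∈ I, {l | 1 ≤ l i})) := by
        ext l; simp [K]
      rw [e]
      refine (isClosed_iInter fun i => isClosed_le continuous_const (continuous_apply i)).inter
        ((isClosed_eq (by fun_prop) continuous_const).inter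
        ((isClosed_iInter fun t => isClosed_eq (by fun_prop) continuous_const).inter
        (isClosed_biInter fun i _ => isClosed_le continuous_const (continuous_apply i))))
    · rintro l ⟨h0, h1, -, -⟩
      refine ⟨h0, fun i => ?_⟩
      rw [← h1]
      exact Finset.single_le_sum (f := l) (fun j _ => h0 j) (Finset.mem_univ i)
  have hKv : ∀ I, Convex ℝ (K I) := by
    rintro I l ⟨h0, h1, h2, h3⟩ l' ⟨h0', h1', h2', h3'⟩ a b ha hb hab
    refine ⟨fun i => ?_, ?_, fun t => ?_, fun i hi => ?_⟩
    · have := h0 i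
      have := h0' i
      simp only [Pi.add_apply, Pi.smul_apply, smul_eq_mul]
      positivity
    · simp only [Pi.add_apply, Pi.smul_apply, smul_eq_mul, Finset.sum_add_distrib,
        ← Finset.mul_sum, h1, h1', ← add_mul, hab, one_mul]
    · simp only [Pi.add_apply, Pi.smul_apply, smul_eq_mul, add_mul, Finset.sum_add_distrib,
        mul_assoc, ← Finset.mul_sum, h2, h2']
      rw [← add_mul, hab, one_mul]
    · have := h3 i hi
      have := h3' i hi
      simp only [Pi.add_apply, Pi.smul_apply, smul_eq_mul]
      nlinarith
  have hsum : ∀ l, ∑ I, (if l ∈ K I then (-1 : ℝ) ^ I.card else 0) = 0 := by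
    intro l
    by_cases hb : (∀ i, 0 ≤ l i) ∧ ∑ i, l i = Fintype.card ι ∧
        (∀ t, ∑ i, l i * (v i t : ℝ) = x t)
    · let T : Finset ι := Finset.univ.filter fun i => 1 ≤ l i
      have hT : T.Nonempty := by
        by_contra hne
        have hlt : ∀ i, l i < 1 := by
          intro i
          by_contra hi
          exact hne ⟨i, by simpa [T] using hi⟩
        have : ∑ i, l i < ∑ i : ι, (1 : ℝ) :=
          Finset.sum_lt_sum_of_nonempty Finset.univ_nonempty fun i _ => hlt i
        rw [hb.2.1] at this
        simp at this
      have h1 : ∀ I, l ∈ K I ↔ I ∈ T.powerset := by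
        intro I
        rw [Finset.mem_powerset]
        constructor
        · rintro ⟨-, -, -, h⟩ i hi
          simpa [T] using h i hi
        · intro h
          exact ⟨hb.1, hb.2.1, hb.2.2, fun i hi => by simpa [T] using h hi⟩
      simp only [h1]
      rw [← Finset.sum_filter, Finset.filter_mem_eq_inter, Finset.univ_inter]
      have := Finset.sum_powerset_neg_one_pow_card_of_nonempty hT
      exact_mod_cast this
    · refine Finset.sum_eq_zero fun I _ => if_neg ?_
      rintro ⟨h0, h1, h2, -⟩
      exact hb ⟨h0, h1, h2⟩
  refine Eq.trans ?_ (euler_aux (fun I : Finset ι => (-1 : ℝ) ^ I.card) Finset.univ 0 K hKc hKv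
    (by simp) (fun l => Eq.trans (Finset.sum_congr rfl fun I _ => by congr) (hsum l)))
  refine Finset.sum_congr rfl fun I _ => ?_
  congr 1
  have hI : I.card ≤ Fintype.card ι := Finset.card_le_univ I
  have ind1 : ∑ i, (if i ∈ I then (1 : ℝ) else 0) = I.card := by simp
  have ind2 : ∀ t, ∑ i, (if i ∈ I then (1 : ℝ) else 0) * (v i t : ℝ) = ∑ i ∈ I, (v i t : ℝ) := by
    intro t; simp
  refine propext ⟨?_, ?_⟩
  · rintro ⟨l, h0, h1, h2⟩
    refine ⟨fun i => l i + if i ∈ I then 1 else 0, fun i => ?_, ?_, fun t => ?_, fun i hi => ?_⟩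
    · have := h0 i
      dsimp only
      split_ifs <;> linarith
    · rw [Finset.sum_add_distrib, h1, ind1, Nat.cast_sub hI]; ring
    · simp only [add_mul, Finset.sum_add_distrib]
      rw [h2, ind2]
      simp
    · simpa [hi] using h0 i
  · rintro ⟨l, h0, h1, h2, h3⟩
    refine ⟨fun i => l i - if i ∈ I then 1 else 0, fun i => ?_, ?_, fun t => ?_⟩
    · have := h0 i
      by_cases hi : i ∈ I
      · simpa [hi] using h3 i hi
      · simpa [hi] using h0 i
    · rw [Finset.sum_sub_distrib, h1, ind1, Nat.cast_sub hI]
    · simp only [sub_mul, Finset.sum_sub_distrib]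
      rw [h2, ind2]
      simp

theorem count_identity {n : ℕ} {ι : Type*} [Fintype ι] [Nonempty ι] (v : ι → Fin n → ℤ) :
    ∑ I : Finset ι, (-1 : ℝ) ^ I.card * ((dilPts v (Fintype.card ι - I.card)).ncard : ℝ) = 0 := by
  classical
  let T : Finset ι → Set (Fin n → ℤ) := fun I =>
    {x | x - ∑ i ∈ I, v i ∈ dilPts v (Fintype.card ι - I.card)}
  have himg : ∀ I, T I = (fun x => x + ∑ i ∈ I, v i) '' dilPts v (Fintype.card ι - I.card) := by
    intro I
    ext x
    constructor
    · intro h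
      exact ⟨_, h, by simp⟩
    · rintro ⟨y, hy, rfl⟩
      simpa [T] using hy
  have hfin : ∀ I, (T I).Finite := fun I => by
    rw [himg]; exact (dilPts_finite v _).image _
  have hcard : ∀ I, (T I).ncard = (dilPts v (Fintype.card ι - I.card)).ncard := fun I => by
    rw [himg]; exact Set.ncard_image_of_injective _ (add_left_injective _)
  let B : Finset (Fin n → ℤ) := (Set.finite_iUnion hfin).toFinset
  have hB : ∀ I, ((T I).ncard : ℝ) = ∑ x ∈ B, if x ∈ T I then (1 : ℝ) else 0 := by
    intro I
    rw [Finset.sum_boole, ← Set.ncard_coe_finset]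
    congr 2
    ext x
    simp only [B, Finset.coe_filter, Set.Finite.mem_toFinset, Set.mem_iUnion, Set.mem_ofPred_eq]
    exact ⟨fun h => ⟨⟨I, h⟩, h⟩, fun h => h.2⟩
  simp only [← hcard, hB, Finset.mul_sum]
  rw [Finset.sum_comm]
  refine Finset.sum_eq_zero fun x _ => ?_
  refine Eq.trans (Finset.sum_congr rfl fun I _ => ?_) (pointwise_identity v x)
  rw [mul_ite, mul_one, mul_zero]
  rfl

theorem eval_zero_eq_one {n : ℕ} {ι : Type*} [Fintype ι] [Nonempty ι] (v : ι → Fin n → ℤ)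
    (L : ℝ[X]) (hL : ∀ k : ℕ, 0 < k → L.eval (k : ℝ) = (dilPts v k).ncard)
    (hdeg : L.natDegree < Fintype.card ι) : L.eval 0 = 1 := by
  have h1 := count_identity v
  rw [← Finset.powerset_univ, Finset.sum_powerset_apply_card
    (fun j => (-1 : ℝ) ^ j * ((dilPts v (Fintype.card ι - j)).ncard : ℝ)), Finset.card_univ] at h1
  rw [← Finset.sum_flip] at h1
  have h2 := congrFun (Polynomial.fwdDiff_iter_eq_zero_of_degree_lt hdeg) 0
  rw [fwdDiff_iter_eq_sum_shift] at h2
  have h3 := h1.trans h2.symm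
  rw [Finset.sum_range_succ', Finset.sum_range_succ'] at h3
  have h4 : ∀ k ∈ Finset.range (Fintype.card ι),
      (Fintype.card ι).choose (Fintype.card ι - (k + 1)) •
        ((-1 : ℝ) ^ (Fintype.card ι - (k + 1)) *
          ((dilPts v (Fintype.card ι - (Fintype.card ι - (k + 1)))).ncard : ℝ)) =
      ((-1 : ℤ) ^ (Fintype.card ι - (k + 1)) * ((Fintype.card ι).choose (k + 1) : ℤ)) •
        L.eval (0 + (k + 1) • (1 : ℝ)) := by
    intro k hk
    have hk' : k + 1 ≤ Fintype.card ι := by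
      have := Finset.mem_range.1 hk; omega
    rw [Nat.choose_symm hk', Nat.sub_sub_self hk']
    have := hL (k + 1) (by omega)
    rw [← this]
    simp only [nsmul_eq_mul, zsmul_eq_mul, zero_add, mul_one]
    push_cast
    ring
  rw [Finset.sum_congr rfl h4] at h3
  have h5 := add_left_cancel h3
  simp only [Nat.sub_zero, Nat.choose_self, Nat.choose_zero_right, Nat.sub_self, dilPts_zero,
    Set.ncard_singleton] at h5
  simp at h5
  exact h5

theorem leadingCoeff_eq_volume {n : ℕ} (P : Set (Fin n → ℝ)) (hc : IsCompact P)
    (hconv : Convex ℝ P) (L : Polynomial ℝ) (hL : IsEhrhartPoly P L) (hdeg : L.natDegree = n)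
    (hL0 : L ≠ 0) : L.leadingCoeff = (volume P).toReal := by
  have h1 := tendsto_card_div_pow_atTop_volume P hc.isBounded hc.measurableSet
    (hconv.addHaar_frontier volume)
  have h2 : Filter.Tendsto (fun x : ℝ => L.eval x / (X ^ n : ℝ[X]).eval x) Filter.atTop
      (nhds (L.leadingCoeff / (X ^ n : ℝ[X]).leadingCoeff)) := by
    apply Polynomial.div_tendsto_atTop_leadingCoeff_div_of_degree_eq
    rw [Polynomial.degree_eq_natDegree hL0, hdeg, degree_X_pow]
  have h3 := h2.comp tendsto_natCast_atTop_atTop (α := ℕ)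
  rw [leadingCoeff_X_pow, div_one] at h3
  refine tendsto_nhds_unique (h3.congr' ?_) h1
  filter_upwards [Filter.eventually_gt_atTop 0] with k hk
  have hk' : (k : ℝ) ≠ 0 := by exact_mod_cast hk.ne'
  simp only [Function.comp_apply, eval_pow, eval_X, Fintype.card_fin]
  rw [hL k hk, Nat.card_coe_set_eq, latticePointCount]
  congr 2
  rw [← Set.ncard_image_of_injective (f := fun v : Fin n → ℤ => fun i => (k : ℝ)⁻¹ * (v i : ℝ))]
  · congr 1
    ext y
    constructor
    · rintro ⟨v, hv, rfl⟩
      have hv' : (fun i => (v i : ℝ)) ∈ (k : ℝ) • P := hv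
      rw [Set.mem_smul_set_iff_inv_smul_mem₀ hk'] at hv'
      refine ⟨hv', ?_⟩
      refine ⟨fun i => (v i : ℝ), ?_, rfl⟩
      refine ((Pi.basisFun ℝ (Fin n)).mem_span_iff_repr_mem ℤ _).2 fun i => ⟨v i, by simp⟩
    · rintro ⟨hy, w, hw, rfl⟩
      have hw' := ((Pi.basisFun ℝ (Fin n)).mem_span_iff_repr_mem ℤ _).1 hw
      choose v hv using hw'
      have hvw : (fun i => (v i : ℝ)) = w := by
        funext i
        simpa using hv i
      refine ⟨v, ?_, ?_⟩
      · show (fun i => (v i : ℝ)) ∈ (k : ℝ) • P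
        rw [hvw, Set.mem_smul_set_iff_inv_smul_mem₀ hk']
        exact hy
      · rw [← hvw]
        rfl
  · intro v w h
    funext i
    have := congrFun h i
    simp only [mul_eq_mul_left_iff, inv_eq_zero, hk', or_false] at this
    exact_mod_cast this

theorem lattice_points_le_of_roots_real_part (n : ℕ) (hn : 2 ≤ n) (a : ℝ) (ha : 0 < a)
    (P : Set (Fin n → ℝ))
    (hP : IsLatticePolytope P) (hfull : (interior P).Nonempty)
    (L : Polynomial ℝ) (hL : IsEhrhartPoly P L) (hdeg : L.natDegree = n)
    (hroots : ∀ z ∈ (L.map (algebraMap ℝ ℂ)).roots, z.re = -1 / a) :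
    (latticePointCount P : ℝ) ≤
      (a + 1) ^ (n - 2) * (a + 2) / a ^ (n - 1) * (volume P).toReal + (a + 1) ^ (n - 2) := by
  obtain ⟨V, hV⟩ := hP
  have hL0 : L ≠ 0 := by
    rintro rfl
    simp at hdeg
    omega
  have hPne : P.Nonempty := hfull.mono interior_subset
  have hVne : V.Nonempty := by
    by_contra h
    rw [Finset.not_nonempty_iff_eq_empty] at h
    rw [hV, h] at hPne
    simp at hPne
  have hconv : Convex ℝ P := hV ▸ convex_convexHull ℝ _
  have hcomp : IsCompact P := by
    rw [hV]
    exact Set.Finite.isCompact_convexHull (𝕜 := ℝ) (V.finite_toSet.image _)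
  have hlead := leadingCoeff_eq_volume P hcomp hconv L hL hdeg hL0
  -- constant coefficient, with each vertex repeated `n + 1` times
  have hconst : L.eval 0 = 1 := by
    have : Nonempty (V × Fin (n + 1)) := ⟨⟨⟨_, hVne.choose_spec⟩, 0⟩⟩
    have hPr : P = convexHull ℝ (Set.range fun i : V × Fin (n + 1) =>
        fun t => (((i.1 : Fin n → ℤ) t : ℤ) : ℝ)) := by
      rw [hV]
      congr 1
      ext y
      constructor
      · rintro ⟨w, hw, rfl⟩
        exact ⟨(⟨w, hw⟩, 0), rfl⟩
      · rintro ⟨i, rfl⟩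
        exact ⟨i.1, i.1.2, rfl⟩
    refine eval_zero_eq_one (fun i : V × Fin (n + 1) => (i.1 : Fin n → ℤ)) L ?_ ?_
    · intro k hk
      rw [hL k hk, latticePointCount]
      congr 2
      ext x
      rw [mem_dilPts_iff _ k hk, ← hPr]
      rfl
    · rw [hdeg, Fintype.card_prod, Fintype.card_fin, Fintype.card_coe]
      have := hVne.card_pos
      nlinarith
  have hone : (latticePointCount P : ℝ) = L.eval 1 := by
    have := hL 1 one_pos
    simpa using this.symm
  have hvpos : 0 < (volume P).toReal := by
    have h1 : (volume P).toReal ≠ 0 := by rw [← hlead]; exact leadingCoeff_ne_zero.2 hL0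
    exact lt_of_le_of_ne ENNReal.toReal_nonneg h1.symm
  set w := (volume P).toReal with hw
  have hp : (C w⁻¹ * L).Monic := by
    rw [← hlead, mul_comm]
    exact monic_mul_leadingCoeff_inv hL0
  have hpd : (C w⁻¹ * L).natDegree = n := by
    rw [natDegree_C_mul (inv_ne_zero hvpos.ne'), hdeg]
  obtain ⟨-, h2⟩ := poly_aux (1 / a) (by positivity) n _ hp hpd (by
    intro z hz
    rw [← neg_div]
    apply hroots
    rw [mem_roots (Polynomial.map_ne_zero hL0), IsRoot.def, eval_map_algebraMap]
    simpa [hvpos.ne'] using hz)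
  rw [eval_C_mul, eval_C_mul, hconst] at h2
  rw [hone]
  obtain ⟨m, rfl⟩ := Nat.exists_eq_add_of_le' hn
  rw [div_le_iff₀ (by positivity), inv_mul_le_iff₀ hvpos] at h2
  refine h2.trans (le_of_eq ?_)
  have e1 : m + 2 - 2 = m := by omega
  have e2 : m + 2 - 1 = m + 1 := by omega
  rw [e1, e2]
  have e3 : 1 + 1 / a = (a + 1) / a := by field_simp
  rw [e3]
  simp only [div_pow, pow_succ, one_pow]
  field_simp
end
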